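/- (No-local-broadcasting of mutual information) Let ρ_{AB} be a bipartite density matrix. There exist quantum channels Λ: A → A₁A₂ and Γ: B → B₁B₂ such that ρ̃ = (Λ ⊗ Γ)[ρ_{AB}] satisfies I(A₁:B₁)_{ρ̃} = I(A₂:B₂)_{ρ̃} = I(A:B)_ρ if and only if ρ_{AB} is classical-classical, i.e., ρ_{AB} = Σ_{ij} p_{ij} |a_i⟩⟨a_i| ⊗ |b_j⟩⟨b_j| for orthonormal bases {|a_i⟩} of H_A and {|b_j⟩} of H_B. -/

import Mathlib

open Matrix Kronecker ComplexOrder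

section Defs
variable {α α' β β' γ : Type*} [Fintype α] [DecidableEq α] [Fintype α'] [DecidableEq α']
  [Fintype β] [DecidableEq β] [Fintype β'] [DecidableEq β'] [Fintype γ] [DecidableEq γ]

/-- A density matrix: a positive semidefinite matrix with unit trace. -/
def IsDensityMatrix (ρ : Matrix β β ℂ) : Prop := ρ.PosSemidef ∧ ρ.trace = 1

/-- The map `id_α ⊗ Λ` induced on matrices over the product index type. -/
noncomputable def idTensor (Λ : Matrix β β ℂ →ₗ[ℂ] Matrix β' β' ℂ) :
    Matrix (α × β) (α × β) ℂ →ₗ[ℂ] Matrix (α × β') (α × β') ℂ where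
  toFun M := Matrix.of fun p q => Λ (Matrix.of fun b b' => M (p.1, b) (q.1, b')) p.2 q.2
  map_add' M N := by
    ext p q
    show Λ (Matrix.of fun b b' => (M + N) (p.1, b) (q.1, b')) p.2 q.2 = _
    have h : (Matrix.of fun b b' => (M + N) (p.1, b) (q.1, b')) =
        (Matrix.of fun b b' => M (p.1, b) (q.1, b')) +
          (Matrix.of fun b b' => N (p.1, b) (q.1, b')) := rfl
    rw [h, map_add]
    rfl
  map_smul' c M := by
    ext p q
    show Λ (Matrix.of fun b b' => (c • M) (p.1, b) (q.1, b')) p.2 q.2 = _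
    have h : (Matrix.of fun b b' => (c • M) (p.1, b) (q.1, b')) =
        c • (Matrix.of fun b b' => M (p.1, b) (q.1, b')) := rfl
    rw [h, _root_.map_smul]
    rfl

/-- The map `Λ ⊗ id_β` induced on matrices over the product index type. -/
noncomputable def tensorId (Λ : Matrix α α ℂ →ₗ[ℂ] Matrix α' α' ℂ) :
    Matrix (α × β) (α × β) ℂ →ₗ[ℂ] Matrix (α' × β) (α' × β) ℂ where
  toFun M := Matrix.of fun p q => Λ (Matrix.of fun a a' => M (a, p.2) (a', q.2)) p.1 q.1
  map_add' M N := by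
    ext p q
    show Λ (Matrix.of fun a a' => (M + N) (a, p.2) (a', q.2)) p.1 q.1 = _
    have h : (Matrix.of fun a a' => (M + N) (a, p.2) (a', q.2)) =
        (Matrix.of fun a a' => M (a, p.2) (a', q.2)) +
          (Matrix.of fun a a' => N (a, p.2) (a', q.2)) := rfl
    rw [h, map_add]
    rfl
  map_smul' c M := by
    ext p q
    show Λ (Matrix.of fun a a' => (c • M) (a, p.2) (a', q.2)) p.1 q.1 = _
    have h : (Matrix.of fun a a' => (c • M) (a, p.2) (a', q.2)) =
        c • (Matrix.of fun a a' => M (a, p.2) (a', q.2)) := rfl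
    rw [h, _root_.map_smul]
    rfl

/-- Complete positivity: all extensions `id ⊗ Λ` preserve positive semidefiniteness. -/
def IsCompletelyPositive (Λ : Matrix β β ℂ →ₗ[ℂ] Matrix β' β' ℂ) : Prop :=
  ∀ (k : ℕ) (M : Matrix (Fin k × β) (Fin k × β) ℂ), M.PosSemidef → (idTensor Λ M).PosSemidef

/-- A quantum channel: a completely positive trace-preserving linear map. -/
def IsQuantumChannel (Λ : Matrix β β ℂ →ₗ[ℂ] Matrix β' β' ℂ) : Prop :=
  IsCompletelyPositive Λ ∧ ∀ X, (Λ X).trace = X.trace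

/-- Partial trace over the second tensor factor. -/
noncomputable def ptraceRight (M : Matrix (α × β) (α × β) ℂ) : Matrix α α ℂ :=
  Matrix.of fun a a' => ∑ b, M (a, b) (a', b)

/-- Partial trace over the first tensor factor. -/
noncomputable def ptraceLeft (M : Matrix (α × β) (α × β) ℂ) : Matrix β β ℂ :=
  Matrix.of fun b b' => ∑ a, M (a, b) (a, b')

/-- The von Neumann entropy `S(ρ) = -Tr(ρ log₂ ρ)`, computed via the eigenvalues
(with the convention `0 log 0 = 0`; junk value `0` for non-Hermitian input). -/
noncomputable def vnEntropy (ρ : Matrix β β ℂ) : ℝ :=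
  if h : ρ.IsHermitian then -∑ i, h.eigenvalues i * Real.logb 2 (h.eigenvalues i) else 0

/-- The mutual information `I(A:B) = S(A) + S(B) - S(AB)` of a bipartite state. -/
noncomputable def mutualInfo (ρ : Matrix (α × β) (α × β) ℂ) : ℝ :=
  vnEntropy (ptraceRight ρ) + vnEntropy (ptraceLeft ρ) - vnEntropy ρ

/-- The reduced state on `A₁B₁` of a state of `(A₁A₂)(B₁B₂)`. -/
noncomputable def marg11 (M : Matrix ((α × α') × β × β') ((α × α') × β × β') ℂ) :
    Matrix (α × β) (α × β) ℂ :=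
  Matrix.of fun p q => ∑ a₂, ∑ b₂, M ((p.1, a₂), (p.2, b₂)) ((q.1, a₂), (q.2, b₂))

/-- The reduced state on `A₂B₂` of a state of `(A₁A₂)(B₁B₂)`. -/
noncomputable def marg22 (M : Matrix ((α × α') × β × β') ((α × α') × β × β') ℂ) :
    Matrix (α' × β') (α' × β') ℂ :=
  Matrix.of fun p q => ∑ a₁, ∑ b₁, M ((a₁, p.1), (b₁, p.2)) ((a₁, q.1), (b₁, q.2))

/-- A bipartite state is classical-classical if it is diagonal in a product of local
orthonormal bases: `ρ = ∑ᵢⱼ pᵢⱼ |aᵢ⟩⟨aᵢ| ⊗ |bⱼ⟩⟨bⱼ|`. -/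
def ClassicalClassical (ρ : Matrix (α × β) (α × β) ℂ) : Prop :=
  ∃ (p : α → β → ℝ) (av : α → α → ℂ) (bv : β → β → ℂ),
    (∀ i j, 0 ≤ p i j) ∧ (∑ i, ∑ j, p i j = 1) ∧
    (∀ i i', star (av i) ⬝ᵥ av i' = if i = i' then 1 else 0) ∧
    (∀ j j', star (bv j) ⬝ᵥ bv j' = if j = j' then 1 else 0) ∧
    ρ = ∑ i, ∑ j, (p i j : ℂ) •
      (vecMulVec (av i) (star (av i)) ⊗ₖ vecMulVec (bv j) (star (bv j)))

end Defs

namespace NLB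

set_option linter.unusedSectionVars false
set_option linter.unusedSimpArgs false
section A
variable {κ m o : Type*} [Fintype κ] [Fintype m] [Fintype o]

/-- The completely positive map with Kraus operators `K`. -/
noncomputable def chan (K : κ → Matrix o m ℂ) (X : Matrix m m ℂ) : Matrix o o ℂ :=
  ∑ k, K k * X * (K k)ᴴ

/-- The Heisenberg dual of `chan K`. -/
noncomputable def dual (K : κ → Matrix o m ℂ) (Y : Matrix o o ℂ) : Matrix m m ℂ :=
  ∑ k, (K k)ᴴ * Y * K k

lemma trace_chan (K : κ → Matrix o m ℂ) (X : Matrix m m ℂ) (Y : Matrix o o ℂ) :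
    (chan K X * Y).trace = (X * dual K Y).trace := by
  simp only [chan, dual, Finset.sum_mul, Finset.mul_sum, trace_sum]
  refine Finset.sum_congr rfl fun k _ => ?_
  rw [Matrix.mul_assoc, Matrix.mul_assoc, Matrix.trace_mul_comm]
  simp only [Matrix.mul_assoc]

lemma dual_conjTranspose (K : κ → Matrix o m ℂ) (Y : Matrix o o ℂ) :
    (dual K Y)ᴴ = dual K Yᴴ := by
  simp [dual, conjTranspose_sum, Matrix.mul_assoc]

lemma chan_conjTranspose (K : κ → Matrix o m ℂ) (Y : Matrix m m ℂ) :
    (chan K Y)ᴴ = chan K Yᴴ := by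
  simp [chan, conjTranspose_sum, Matrix.mul_assoc]

lemma chan_psd (K : κ → Matrix o m ℂ) {X : Matrix m m ℂ} (h : X.PosSemidef) :
    (chan K X).PosSemidef :=
  posSemidef_sum _ fun k _ => h.mul_mul_conjTranspose_same (K k)

lemma trace_chan_eq [DecidableEq m] [DecidableEq o] (K : κ → Matrix o m ℂ)
    (hK : ∑ k, (K k)ᴴ * K k = 1) (X : Matrix m m ℂ) :
    (chan K X).trace = X.trace := by
  have := trace_chan K X 1
  simpa [dual, hK] using this

open scoped MatrixOrder in
lemma psd_factor [DecidableEq m] {σ : Matrix m m ℂ} (h : σ.PosSemidef) :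
    ∃ B : Matrix m m ℂ, σ = Bᴴ * B :=
  CStarAlgebra.nonneg_iff_eq_star_mul_self.mp h.nonneg

lemma psd_kill [DecidableEq m] {σ : Matrix m m ℂ} (h : σ.PosSemidef) (Z : Matrix o m ℂ)
    (hz : (Z * σ * Zᴴ).trace = 0) : Z * σ = 0 := by
  obtain ⟨B, rfl⟩ := psd_factor h
  have h2 : ((Z * Bᴴ) * (Z * Bᴴ)ᴴ).trace = 0 := by
    rw [← hz]; simp [Matrix.mul_assoc]
  rw [trace_mul_conjTranspose_self_eq_zero_iff] at h2
  rw [← Matrix.mul_assoc, h2, Matrix.zero_mul]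

lemma psd_tr_nonneg {σ : Matrix m m ℂ} (h : σ.PosSemidef) (Z : Matrix o m ℂ) :
    0 ≤ (Z * σ * Zᴴ).trace.re :=
  (Complex.le_def.mp (h.mul_mul_conjTranspose_same Z).trace_nonneg).1

lemma psd_kill_re [DecidableEq m] {σ : Matrix m m ℂ} (h : σ.PosSemidef) (Z : Matrix o m ℂ)
    (hz : (Z * σ * Zᴴ).trace.re = 0) : Z * σ = 0 := by
  apply psd_kill h
  have := Complex.le_def.mp (h.mul_mul_conjTranspose_same Z).trace_nonneg
  apply Complex.ext
  · simpa using hz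
  · simpa using this.2.symm

/-- Sum-of-squares form of the Kadison-Schwarz inequality, traced against `σ`. -/
lemma ks_identity [DecidableEq m] (K : κ → Matrix o m ℂ) (hK : ∑ k, (K k)ᴴ * K k = 1)
    (σ : Matrix m m ℂ) (Y : Matrix o o ℂ) :
    ∑ k, ((Yᴴ * K k - K k * (dual K Y)ᴴ) * σ * (Yᴴ * K k - K k * (dual K Y)ᴴ)ᴴ).trace
      = (chan K σ * (Y * Yᴴ)).trace - (σ * (dual K Y * (dual K Y)ᴴ)).trace := by
  set x := dual K Y with hx
  have h1 : ∀ k, ((Yᴴ * K k - K k * xᴴ) * σ * (Yᴴ * K k - K k * xᴴ)ᴴ).trace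
      = (σ * ((K k)ᴴ * (Y * Yᴴ) * K k)).trace - (σ * (((K k)ᴴ * Y * K k) * xᴴ)).trace
        - (σ * (x * ((K k)ᴴ * Yᴴ * K k))).trace + (σ * (x * ((K k)ᴴ * K k) * xᴴ)).trace := by
    intro k
    rw [Matrix.mul_assoc, Matrix.trace_mul_comm, Matrix.mul_assoc, ← trace_sub, ← trace_sub,
      ← trace_add]
    congr 1
    simp only [conjTranspose_sub, conjTranspose_mul, conjTranspose_conjTranspose, ← Matrix.mul_sub,
      ← Matrix.mul_add]
    congr 1
    simp only [Matrix.mul_sub, Matrix.sub_mul, Matrix.mul_assoc]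
    abel
  simp only [h1, Finset.sum_add_distrib, Finset.sum_sub_distrib, ← trace_sum, ← Finset.mul_sum,
    ← Finset.sum_mul, hK]
  rw [trace_chan]
  have h2 : ∑ k, (K k)ᴴ * Y * K k = x := rfl
  have h3 : ∑ k, (K k)ᴴ * Yᴴ * K k = xᴴ := by rw [hx, dual_conjTranspose]; rfl
  have h4 : ∑ k, (K k)ᴴ * (Y * Yᴴ) * K k = dual K (Y * Yᴴ) := rfl
  rw [h2, h3, h4]
  simp

lemma key_identity [DecidableEq m] (K : κ → Matrix o m ℂ) (hK : ∑ k, (K k)ᴴ * K k = 1)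
    (ρ σ : Matrix m m ℂ) (hρ : ρ.IsHermitian) (hσ : σ.IsHermitian) (t : ℝ)
    (X : Matrix m m ℂ) (Y : Matrix o o ℂ)
    (hX : σ * X + (t : ℂ) • (X * ρ) = ρ)
    (hY : chan K σ * Y + (t : ℂ) • (Y * chan K ρ) = chan K ρ) :
    (((dual K Y - X)ᴴ * σ * (dual K Y - X)ᴴᴴ).trace
      + (t : ℂ) * ((dual K Y - X) * ρ * (dual K Y - X)ᴴ).trace)
      + ∑ k, ((Yᴴ * K k - K k * (dual K Y)ᴴ) * σ * (Yᴴ * K k - K k * (dual K Y)ᴴ)ᴴ).trace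
      + (t : ℂ) * ∑ k, ((Y * K k - K k * (dual K Y)) * ρ * (Y * K k - K k * (dual K Y))ᴴ).trace
      = (Xᴴ * ρ).trace - (chan K ρ * Y).trace := by
  have k1 := ks_identity K hK σ Y
  have k2 := ks_identity K hK ρ Yᴴ
  simp only [dual_conjTranspose, conjTranspose_conjTranspose] at k1 k2 ⊢
  rw [k1, k2]
  simp only [← dual_conjTranspose]
  have e1 : (chan K ρ * Y).trace = (ρ * dual K Y).trace := trace_chan K ρ Y
  have e2 : (Yᴴ * chan K ρ).trace = ((dual K Y)ᴴ * ρ).trace := by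
    rw [Matrix.trace_mul_comm, trace_chan, dual_conjTranspose, Matrix.trace_mul_comm]
  have e3 : (chan K σ * (Y * Yᴴ)).trace + (t : ℂ) * (chan K ρ * (Yᴴ * Y)).trace
      = (Yᴴ * chan K ρ).trace := by
    conv_rhs => rw [← hY]
    rw [Matrix.mul_add, trace_add, Matrix.mul_smul, trace_smul, smul_eq_mul]
    congr 1
    · rw [← Matrix.mul_assoc, Matrix.trace_mul_comm]
    · rw [Matrix.trace_mul_comm, Matrix.mul_assoc]
  set x := dual K Y with hx
  have hX' : Xᴴ * σ + (t : ℂ) • (ρ * Xᴴ) = ρ := by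
    have := congrArg conjTranspose hX
    simpa [hρ.eq, hσ.eq] using this
  have f1 : (xᴴ * ρ).trace = (xᴴ * σ * X).trace + (t : ℂ) * (X * ρ * xᴴ).trace := by
    conv_lhs => rw [← hX]
    rw [Matrix.mul_add, trace_add, Matrix.mul_smul, trace_smul, smul_eq_mul, Matrix.mul_assoc,
      Matrix.trace_mul_comm xᴴ (X * ρ)]
  have f2 : (ρ * x).trace = (Xᴴ * σ * x).trace + (t : ℂ) * (x * ρ * Xᴴ).trace := by
    conv_lhs => rw [← hX']
    rw [Matrix.add_mul, trace_add, Matrix.smul_mul, trace_smul, smul_eq_mul,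
      Matrix.trace_mul_comm (ρ * Xᴴ), Matrix.mul_assoc x]
  have f3 : (Xᴴ * ρ).trace = (Xᴴ * σ * X).trace + (t : ℂ) * (X * ρ * Xᴴ).trace := by
    conv_lhs => rw [← hX]
    rw [Matrix.mul_add, trace_add, Matrix.mul_smul, trace_smul, smul_eq_mul, Matrix.mul_assoc,
      Matrix.trace_mul_comm Xᴴ (X * ρ)]
  have g1 : (xᴴ * σ * x).trace = (σ * (x * xᴴ)).trace := by
    rw [Matrix.mul_assoc, Matrix.trace_mul_comm, Matrix.mul_assoc]
  have g2 : (x * ρ * xᴴ).trace = (ρ * (xᴴ * x)).trace := by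
    rw [Matrix.mul_assoc, Matrix.trace_mul_comm, Matrix.mul_assoc]
  simp only [conjTranspose_sub, conjTranspose_conjTranspose, Matrix.mul_sub, Matrix.sub_mul,
    trace_sub]
  rw [g1, g2, e1]
  linear_combination e3 + e2 + f1 + f2 - f3

lemma key_ineq [DecidableEq m] (K : κ → Matrix o m ℂ) (hK : ∑ k, (K k)ᴴ * K k = 1)
    (ρ σ : Matrix m m ℂ) (hρ : ρ.PosSemidef) (hσ : σ.PosSemidef) (t : ℝ) (ht : 0 < t)
    (X : Matrix m m ℂ) (Y : Matrix o o ℂ)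
    (hX : σ * X + (t : ℂ) • (X * ρ) = ρ)
    (hY : chan K σ * Y + (t : ℂ) • (Y * chan K ρ) = chan K ρ) :
    (chan K ρ * Y).trace.re ≤ (ρ * X).trace.re ∧
    ((chan K ρ * Y).trace.re = (ρ * X).trace.re → ∀ k, σ * (K k)ᴴ * Y = σ * X * (K k)ᴴ) := by
  have h := congrArg Complex.re (key_identity K hK ρ σ hρ.isHermitian hσ.isHermitian t X Y hX hY)
  have hconj : (Xᴴ * ρ).trace.re = (ρ * X).trace.re := by
    have : (Xᴴ * ρ).trace = star (ρ * X).trace := by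
      rw [← trace_conjTranspose, conjTranspose_mul, hρ.isHermitian.eq]
    rw [this]; simp
  simp only [Complex.add_re, Complex.sub_re, Complex.re_ofReal_mul, hconj, Complex.re_sum] at h
  have n1 := psd_tr_nonneg hσ (dual K Y - X)ᴴ
  have n2 := mul_nonneg ht.le (psd_tr_nonneg hρ (dual K Y - X))
  have n3 : ∀ k ∈ Finset.univ, 0 ≤ ((Yᴴ * K k - K k * (dual K Y)ᴴ) * σ * (Yᴴ * K k - K k * (dual K Y)ᴴ)ᴴ).trace.re :=
    fun k _ => psd_tr_nonneg hσ _
  have n4 : 0 ≤ t * ∑ k, ((Y * K k - K k * (dual K Y)) * ρ * (Y * K k - K k * (dual K Y))ᴴ).trace.re :=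
    mul_nonneg ht.le (Finset.sum_nonneg fun k _ => psd_tr_nonneg hρ _)
  have n3' := Finset.sum_nonneg n3
  refine ⟨by linarith, fun heq k => ?_⟩
  have z1 := psd_kill_re hσ (dual K Y - X)ᴴ (by linarith)
  have z3 := (Finset.sum_eq_zero_iff_of_nonneg n3).mp (by linarith) k (Finset.mem_univ k)
  have z3 := psd_kill_re hσ _ z3
  have y1 : σ * dual K Y = σ * X := by
    have := congrArg conjTranspose z1
    simp [hσ.isHermitian.eq, Matrix.mul_sub] at this
    exact sub_eq_zero.mp this
  have y3 : σ * (K k)ᴴ * Y = σ * dual K Y * (K k)ᴴ := by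
    have := congrArg conjTranspose z3
    simp [hσ.isHermitian.eq, Matrix.mul_sub] at this
    rw [Matrix.mul_assoc, Matrix.mul_assoc]
    exact sub_eq_zero.mp this
  rw [y3, y1]

end A
end NLB

namespace NLB
section C

lemma hasDeriv_logsum {I : Type*} [Fintype I] (w p q : I → ℝ)
    (hpos : ∀ x, w x ≠ 0 → 0 < p x ∧ 0 < q x) (t : ℝ) (ht : 0 ≤ t) :
    HasDerivAt (fun s : ℝ => ∑ x, w x * Real.log (q x + s * p x))
      (∑ x, w x * (p x / (q x + t * p x))) t := by
  apply HasDerivAt.fun_sum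
  intro x _
  by_cases hx : w x = 0
  · simpa [hx] using hasDerivAt_const t (0 : ℝ)
  · obtain ⟨h1, h2⟩ := hpos x hx
    have h3 : q x + t * p x ≠ 0 := by positivity
    have h4 : HasDerivAt (fun s : ℝ => q x + s * p x) (p x) t := by
      simpa using ((hasDerivAt_id t).mul_const (p x)).const_add (q x)
    exact (h4.log h3).const_mul (w x)

lemma tendsto_logsum {I : Type*} [Fintype I] (w p q : I → ℝ)
    (hpos : ∀ x, w x ≠ 0 → 0 < p x ∧ 0 < q x) :
    Filter.Tendsto (fun s : ℝ => ∑ x, w x * (Real.log (q x + s * p x) - Real.log s)) Filter.atTop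
      (nhds (∑ x, w x * Real.log (p x))) := by
  apply tendsto_finsetSum
  intro x _
  by_cases hx : w x = 0
  · simp [hx]
  · obtain ⟨h1, h2⟩ := hpos x hx
    apply Filter.Tendsto.const_mul
    have h3 : Filter.Tendsto (fun s : ℝ => q x / s + p x) Filter.atTop (nhds (0 + p x)) :=
      (tendsto_const_nhds.div_atTop Filter.tendsto_id).add tendsto_const_nhds
    rw [zero_add] at h3
    refine (h3.log h1.ne').congr' ?_
    filter_upwards [Filter.eventually_gt_atTop 0] with s hs
    rw [← Real.log_div (by positivity) hs.ne']
    congr 1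
    field_simp

lemma log_compare {I J : Type*} [Fintype I] [Fintype J] (w p q : I → ℝ) (w' p' q' : J → ℝ)
    (hpos : ∀ x, w x ≠ 0 → 0 < p x ∧ 0 < q x)
    (hpos' : ∀ x, w' x ≠ 0 → 0 < p' x ∧ 0 < q' x)
    (hsum : ∑ x, w x = ∑ x, w' x)
    (hF : ∀ t : ℝ, 0 < t →
      ∑ x, w' x * (p' x / (q' x + t * p' x)) ≤ ∑ x, w x * (p x / (q x + t * p x))) :
    (∑ x, w' x * Real.log (p' x) - ∑ x, w' x * Real.log (q' x) ≤
      ∑ x, w x * Real.log (p x) - ∑ x, w x * Real.log (q x)) ∧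
    (∑ x, w' x * Real.log (p' x) - ∑ x, w' x * Real.log (q' x) =
      ∑ x, w x * Real.log (p x) - ∑ x, w x * Real.log (q x) →
      ∀ t : ℝ, 0 < t →
      ∑ x, w' x * (p' x / (q' x + t * p' x)) = ∑ x, w x * (p x / (q x + t * p x))) := by
  set k : ℝ → ℝ := fun s => ∑ x, w x * Real.log (q x + s * p x)
    - ∑ x, w' x * Real.log (q' x + s * p' x) with hk
  have hd : ∀ t, 0 ≤ t → HasDerivAt k (∑ x, w x * (p x / (q x + t * p x))
      - ∑ x, w' x * (p' x / (q' x + t * p' x))) t := fun t ht =>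
    (hasDeriv_logsum w p q hpos t ht).sub (hasDeriv_logsum w' p' q' hpos' t ht)
  have hmono : MonotoneOn k (Set.Ici 0) := by
    apply monotoneOn_of_deriv_nonneg (convex_Ici 0)
    · exact fun t ht => (hd t ht).continuousAt.continuousWithinAt
    · intro t ht
      rw [interior_Ici] at ht
      exact (hd t (le_of_lt ht)).differentiableAt.differentiableWithinAt
    · intro t ht
      rw [interior_Ici] at ht
      rw [(hd t (le_of_lt ht)).deriv]
      linarith [hF t ht]
  have hlim : Filter.Tendsto k Filter.atTop
      (nhds (∑ x, w x * Real.log (p x) - ∑ x, w' x * Real.log (p' x))) := by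
    refine ((tendsto_logsum w p q hpos).sub (tendsto_logsum w' p' q' hpos')).congr fun s => ?_
    simp only [mul_sub, Finset.sum_sub_distrib, ← Finset.sum_mul, hsum, hk]
    ring
  have hle : ∀ t, 0 ≤ t → k t ≤ ∑ x, w x * Real.log (p x) - ∑ x, w' x * Real.log (p' x) := by
    intro t ht
    apply ge_of_tendsto hlim
    filter_upwards [Filter.eventually_ge_atTop t] with s hs
    exact hmono ht (le_trans ht hs) hs
  have h0 : k 0 = ∑ x, w x * Real.log (q x) - ∑ x, w' x * Real.log (q' x) := by simp [hk]
  refine ⟨by linarith [hle 0 le_rfl], fun heq t ht => ?_⟩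
  have hconst : ∀ s, 0 ≤ s → k s = k 0 := fun s hs =>
    le_antisymm (by linarith [hle s hs]) (hmono (Set.mem_Ici.mpr le_rfl) hs hs)
  have h1 : HasDerivAt k 0 t := by
    refine (hasDerivAt_const t (k 0)).congr_of_eventuallyEq ?_
    filter_upwards [lt_mem_nhds ht] with s hs
    exact hconst s hs.le
  linarith [(hd t ht.le).unique h1]

/-- If a combination of resolvent-type functions vanishes for all `t`, so does the corresponding
combination of any function vanishing at `0`. -/
lemma resolvent_interp {I : Type*} [Fintype I] (c : I → ℂ) (x : I → ℝ)
    (h : ∀ t : ℝ, 0 < t → ∑ i, c i * ((x i / (1 + t * x i) : ℝ) : ℂ) = 0)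
    (hx : ∀ i, 0 ≤ x i) (f : ℝ → ℝ) (hf : f 0 = 0) :
    ∑ i, c i * ((f (x i) : ℝ) : ℂ) = 0 := by
  classical
  set S : Finset ℝ := Finset.univ.image x with hS
  have hmem : ∀ i, x i ∈ S := fun i => Finset.mem_image_of_mem x (Finset.mem_univ i)
  have hSn : ∀ y ∈ S, 0 ≤ y := by
    intro y hy
    obtain ⟨i, _, rfl⟩ := Finset.mem_image.mp hy
    exact hx i
  let P : Polynomial ℂ := ∑ i, Polynomial.C (c i * (x i : ℂ)) *
    ∏ y ∈ S.erase (x i), (1 + Polynomial.C (y : ℂ) * Polynomial.X)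
  have hev : ∀ z : ℂ, P.eval z = ∑ i, c i * (x i : ℂ) * ∏ y ∈ S.erase (x i), (1 + (y : ℂ) * z) := by
    intro z
    simp [P, Polynomial.eval_finsetSum, Polynomial.eval_prod]
  have hP0 : P = 0 := by
    apply Polynomial.eq_zero_of_infinite_isRoot
    refine Set.Infinite.mono (s := (fun t : ℝ => (t : ℂ)) '' Set.Ioi 0) ?_
      ((Set.Ioi_infinite 0).image (Complex.ofReal_injective.injOn))
    rintro _ ⟨t, ht, rfl⟩
    have ht : 0 < t := ht
    show P.eval (t : ℂ) = 0
    rw [hev]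
    have h1 : ∑ i, c i * (x i : ℂ) * ∏ y ∈ S.erase (x i), (1 + (y : ℂ) * (t : ℂ))
        = (∏ y ∈ S, (1 + (y : ℂ) * (t : ℂ))) * ∑ i, c i * ((x i / (1 + t * x i) : ℝ) : ℂ) := by
      rw [Finset.mul_sum]
      refine Finset.sum_congr rfl fun i _ => ?_
      rw [← Finset.mul_prod_erase S _ (hmem i)]
      have h2 : (1 + (t : ℂ) * (x i : ℂ)) ≠ 0 := by
        have : 1 + t * x i ≠ 0 := by have := hx i; positivity
        exact_mod_cast this
      push_cast
      generalize ∏ y ∈ S.erase (x i), (1 + (y : ℂ) * (t : ℂ)) = Q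
      rw [mul_comm (t : ℂ)] at h2
      field_simp
    rw [h1, h t ht, mul_zero]
  have hgroup : ∀ y ∈ S, y ≠ 0 → ∑ i with x i = y, c i = 0 := by
    intro y hy hy0
    have h1 : P.eval (-(1 / (y : ℂ))) = 0 := by rw [hP0]; simp
    rw [hev] at h1
    have hyc : (y : ℂ) ≠ 0 := by exact_mod_cast hy0
    have h2 : ∀ i, c i * (x i : ℂ) * ∏ y' ∈ S.erase (x i), (1 + (y' : ℂ) * (-(1 / (y : ℂ))))
        = if x i = y then c i * ((y : ℂ) * ∏ y' ∈ S.erase y, (1 + (y' : ℂ) * (-(1 / (y : ℂ))))) else 0 := by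
      intro i
      split_ifs with hi
      · rw [hi]; ring
      · rw [Finset.prod_eq_zero (i := y)]
        · simp
        · exact Finset.mem_erase.mpr ⟨fun h => hi h.symm, hy⟩
        · field_simp; ring
    simp only [h2] at h1
    rw [← Finset.sum_filter, ← Finset.sum_mul] at h1
    refine (mul_eq_zero.mp h1).resolve_right ?_
    refine mul_ne_zero hyc (Finset.prod_ne_zero_iff.mpr fun y' hy' => ?_)
    have hne := (Finset.mem_erase.mp hy').1
    intro h3
    apply hne
    have h4 : (y' : ℂ) = y := by
      field_simp at h3
      linear_combination -h3
    exact_mod_cast h4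
  rw [← Finset.sum_fiberwise_of_maps_to (s := Finset.univ) (t := S) (g := x) (fun i _ => hmem i)]
  refine Finset.sum_eq_zero fun y hy => ?_
  by_cases hy0 : y = 0
  · refine Finset.sum_eq_zero fun i hi => ?_
    rw [(Finset.mem_filter.mp hi).2, hy0, hf]; simp
  · have : ∑ i with x i = y, c i * ((f (x i) : ℝ) : ℂ) = (∑ i with x i = y, c i) * (f y : ℂ) := by
      rw [Finset.sum_mul]
      refine Finset.sum_congr rfl fun i hi => ?_
      rw [(Finset.mem_filter.mp hi).2]
    rw [this, hgroup y hy hy0, zero_mul]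

end C
end NLB

namespace NLB
set_option linter.unusedSectionVars false
set_option linter.unusedSimpArgs false
section D
variable {κ m o : Type*} [Fintype κ] [Fintype m] [Fintype o] [DecidableEq m] [DecidableEq o]

/-- `M = U diag(p) Uᴴ` with `U` unitary. -/
def IsSpec (M U : Matrix m m ℂ) (p : m → ℝ) : Prop :=
  Uᴴ * U = 1 ∧ U * Uᴴ = 1 ∧ M = U * diagonal (fun i => (p i : ℂ)) * Uᴴ

/-- Functions of the relative modular operator applied to the identity. -/
noncomputable def hadX (U W : Matrix m m ℂ) (g : m → m → ℝ) : Matrix m m ℂ :=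
  W * Matrix.of (fun j i => (g j i : ℂ) * (Wᴴ * U) j i) * Uᴴ

lemma hadX_left {σ U W : Matrix m m ℂ} {q : m → ℝ} (h : IsSpec σ W q) (g : m → m → ℝ) :
    σ * hadX U W g = hadX U W (fun j i => q j * g j i) := by
  obtain ⟨h1, h2, rfl⟩ := h
  unfold hadX
  have : diagonal (fun i => (q i : ℂ)) * Matrix.of (fun j i => (g j i : ℂ) * (Wᴴ * U) j i)
      = Matrix.of (fun j i => ((q j * g j i : ℝ) : ℂ) * (Wᴴ * U) j i) := by
    ext j i
    simp [diagonal_mul, mul_assoc]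
  rw [← this]
  simp only [Matrix.mul_assoc]
  rw [← Matrix.mul_assoc Wᴴ W, h1, Matrix.one_mul]

lemma hadX_right {ρ U W : Matrix m m ℂ} {p : m → ℝ} (h : IsSpec ρ U p) (g : m → m → ℝ) :
    hadX U W g * ρ = hadX U W (fun j i => g j i * p i) := by
  obtain ⟨h1, h2, rfl⟩ := h
  unfold hadX
  have : Matrix.of (fun j i => (g j i : ℂ) * (Wᴴ * U) j i) * diagonal (fun i => (p i : ℂ))
      = Matrix.of (fun j i => ((g j i * p i : ℝ) : ℂ) * (Wᴴ * U) j i) := by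
    ext j i
    simp [mul_diagonal]
    ring
  rw [← this]
  simp only [Matrix.mul_assoc]
  rw [← Matrix.mul_assoc Uᴴ U, h1, Matrix.one_mul]

lemma hadX_one {U W : Matrix m m ℂ} (hU : U * Uᴴ = 1) (hW : W * Wᴴ = 1) :
    hadX U W (fun _ _ => 1) = 1 := by
  have : Matrix.of (fun j i => ((1 : ℝ) : ℂ) * (Wᴴ * U) j i) = Wᴴ * U := by
    ext j i; simp
  unfold hadX
  rw [this, ← Matrix.mul_assoc W, hW, Matrix.one_mul, hU]

lemma hadX_rho {ρ U W : Matrix m m ℂ} {p : m → ℝ} (h : IsSpec ρ U p) (hW : W * Wᴴ = 1) :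
    hadX U W (fun _ i => p i) = ρ := by
  have := hadX_right (W := W) h (fun _ _ => 1)
  rw [hadX_one h.2.1 hW, Matrix.one_mul] at this
  rw [this]; simp

lemma hadX_add_smul (U W : Matrix m m ℂ) (g g' : m → m → ℝ) (t : ℝ) :
    hadX U W g + (t : ℂ) • hadX U W g' = hadX U W (fun j i => g j i + t * g' j i) := by
  unfold hadX
  rw [← Matrix.smul_mul, ← Matrix.mul_smul, ← Matrix.add_mul, ← Matrix.mul_add]
  congr 2
  ext j i
  simp
  ring

lemma hadX_congr (U W : Matrix m m ℂ) (g g' : m → m → ℝ)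
    (h : ∀ j i, (Wᴴ * U) j i ≠ 0 → g j i = g' j i) : hadX U W g = hadX U W g' := by
  unfold hadX
  congr 2
  ext j i
  by_cases hc : (Wᴴ * U) j i = 0
  · simp [hc]
  · simp [h j i hc]

/-- The weights appearing in the relative entropy. -/
noncomputable def wt (U W : Matrix m m ℂ) (p : m → ℝ) (x : m × m) : ℝ :=
  Complex.normSq ((Wᴴ * U) x.1 x.2) * p x.2

lemma trace_hadX {ρ U W : Matrix m m ℂ} {p : m → ℝ} (h : IsSpec ρ U p) (g : m → m → ℝ) :
    (ρ * hadX U W g).trace = ((∑ x : m × m, wt U W p x * g x.1 x.2 : ℝ) : ℂ) := by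
  obtain ⟨h1, h2, rfl⟩ := h
  unfold hadX
  set B := Matrix.of (fun j i => (g j i : ℂ) * (Wᴴ * U) j i) with hB
  have e1 : (U * diagonal (fun i => (p i : ℂ)) * Uᴴ * (W * B * Uᴴ)).trace
      = (diagonal (fun i => (p i : ℂ)) * ((Uᴴ * W) * B)).trace := by
    rw [← Matrix.mul_assoc _ (W * B) Uᴴ, Matrix.trace_mul_comm]
    simp only [← Matrix.mul_assoc]
    rw [h1, Matrix.one_mul]
  rw [e1, Matrix.trace]
  simp only [diag_apply, diagonal_mul]
  rw [Fintype.sum_prod_type_right]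
  push_cast
  refine Finset.sum_congr rfl fun i _ => ?_
  rw [Matrix.mul_apply, Finset.mul_sum]
  refine Finset.sum_congr rfl fun j _ => ?_
  have : (Uᴴ * W) i j = star ((Wᴴ * U) j i) := by
    rw [← conjTranspose_apply, conjTranspose_mul, conjTranspose_conjTranspose]
  rw [this, wt, hB]
  simp only [Matrix.of_apply, Complex.ofReal_mul, ← Complex.mul_conj, Complex.star_def]
  ring

lemma hadX_sum (U W : Matrix m m ℂ) (g : m → m → ℝ) :
    hadX U W g = ∑ x : m × m, (g x.1 x.2 : ℂ) • (W * Matrix.single x.1 x.2 ((Wᴴ * U) x.1 x.2) * Uᴴ) := by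
  unfold hadX
  rw [Fintype.sum_prod_type]
  conv_lhs => rw [Matrix.matrix_eq_sum_single (Matrix.of (fun j i => (g j i : ℂ) * (Wᴴ * U) j i))]
  simp only [Matrix.mul_sum, Matrix.sum_mul]
  refine Finset.sum_congr rfl fun j _ => Finset.sum_congr rfl fun i _ => ?_
  rw [← Matrix.smul_mul, ← Matrix.mul_smul, Matrix.smul_single, smul_eq_mul, Matrix.of_apply]

lemma resolvent_eq {ρ σ U W : Matrix m m ℂ} {p q : m → ℝ} (hρ : IsSpec ρ U p) (hσ : IsSpec σ W q)
    (hp : ∀ i, 0 ≤ p i) (hq : ∀ i, 0 ≤ q i) (t : ℝ) (ht : 0 < t) :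
    σ * hadX U W (fun j i => p i / (q j + t * p i)) +
      (t : ℂ) • (hadX U W (fun j i => p i / (q j + t * p i)) * ρ) = ρ := by
  rw [hadX_left hσ, hadX_right hρ, hadX_add_smul]
  conv_rhs => rw [← hadX_rho hρ hσ.2.1]
  congr 1
  ext j i
  by_cases h : p i = 0
  · simp [h]
  · have h1 : 0 < p i := lt_of_le_of_ne (hp i) (Ne.symm h)
    have h2 := hq j
    have h3 : q j + t * p i ≠ 0 := by positivity
    field_simp

theorem dpi_spec (K : κ → Matrix o m ℂ) (hK : ∑ k, (K k)ᴴ * K k = 1)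
    {ρ σ U W : Matrix m m ℂ} {U' W' : Matrix o o ℂ} {p q : m → ℝ} {p' q' : o → ℝ}
    (hρ : ρ.PosSemidef) (hσ : σ.PosSemidef)
    (sρ : IsSpec ρ U p) (sσ : IsSpec σ W q)
    (sρ' : IsSpec (chan K ρ) U' p') (sσ' : IsSpec (chan K σ) W' q')
    (hp : ∀ i, 0 ≤ p i) (hq : ∀ i, 0 ≤ q i) (hp' : ∀ i, 0 ≤ p' i) (hq' : ∀ i, 0 ≤ q' i)
    (supp : ∀ x, q x.1 = 0 → wt U W p x = 0) (supp' : ∀ x, q' x.1 = 0 → wt U' W' p' x = 0) :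
    (∑ x, wt U' W' p' x * Real.log (p' x.2) - ∑ x, wt U' W' p' x * Real.log (q' x.1) ≤
      ∑ x, wt U W p x * Real.log (p x.2) - ∑ x, wt U W p x * Real.log (q x.1)) ∧
    (∑ x, wt U' W' p' x * Real.log (p' x.2) - ∑ x, wt U' W' p' x * Real.log (q' x.1) =
      ∑ x, wt U W p x * Real.log (p x.2) - ∑ x, wt U W p x * Real.log (q x.1) →
      ∀ k, σ * (K k)ᴴ * hadX U' W' (fun j i => √(p' i / q' j))
        = σ * hadX U W (fun j i => √(p i / q j)) * (K k)ᴴ) := by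
  have hkey := fun (t : ℝ) (ht : 0 < t) => key_ineq K hK ρ σ hρ hσ t ht _ _
    (resolvent_eq sρ sσ hp hq t ht) (resolvent_eq sρ' sσ' hp' hq' t ht)
  have wpos : ∀ x, wt U W p x ≠ 0 → 0 < p x.2 ∧ 0 < q x.1 := by
    intro x hx
    refine ⟨lt_of_le_of_ne (hp _) fun h => hx ?_, lt_of_le_of_ne (hq _) fun h => hx (supp x h.symm)⟩
    simp [wt, ← h]
  have wpos' : ∀ x, wt U' W' p' x ≠ 0 → 0 < p' x.2 ∧ 0 < q' x.1 := by
    intro x hx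
    refine ⟨lt_of_le_of_ne (hp' _) fun h => hx ?_,
      lt_of_le_of_ne (hq' _) fun h => hx (supp' x h.symm)⟩
    simp [wt, ← h]
  have hsum : ∑ x, wt U W p x = ∑ x, wt U' W' p' x := by
    have h1 := trace_hadX (W := W) sρ (fun _ _ => 1)
    have h2 := trace_hadX (W := W') sρ' (fun _ _ => 1)
    rw [hadX_one sρ.2.1 sσ.2.1, Matrix.mul_one] at h1
    rw [hadX_one sρ'.2.1 sσ'.2.1, Matrix.mul_one, trace_chan_eq K hK, h1] at h2
    simpa using (Complex.ofReal_injective h2)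
  have hcmp := log_compare (wt U W p) (fun x => p x.2) (fun x => q x.1)
    (wt U' W' p') (fun x => p' x.2) (fun x => q' x.1) wpos wpos' hsum (fun t ht => by
      have := (hkey t ht).1
      rw [trace_hadX sρ, trace_hadX sρ', Complex.ofReal_re, Complex.ofReal_re] at this
      exact this)
  refine ⟨hcmp.1, fun heq k => ?_⟩
  have h1 := hcmp.2 heq
  have h2 : ∀ t : ℝ, 0 < t → σ * (K k)ᴴ * hadX U' W' (fun j i => (p' i / q' j) / (1 + t * (p' i / q' j)))
      = σ * hadX U W (fun j i => (p i / q j) / (1 + t * (p i / q j))) * (K k)ᴴ := by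
    intro t ht
    have h3 := (hkey t ht).2 (by
      rw [trace_hadX sρ, trace_hadX sρ', Complex.ofReal_re, Complex.ofReal_re]
      exact h1 t ht) k
    rw [hadX_congr U' W' (fun j i => (p' i / q' j) / (1 + t * (p' i / q' j)))
        (fun j i => p' i / (q' j + t * p' i)),
      hadX_congr U W (fun j i => (p i / q j) / (1 + t * (p i / q j)))
        (fun j i => p i / (q j + t * p i))]
    · exact h3
    · intro j i hc
      by_cases hqj : q j = 0
      · have := supp (j, i) hqj
        have hpi : p i = 0 := by simpa [wt, hc] using this
        simp [hpi]
      · have := lt_of_le_of_ne (hq j) (Ne.symm hqj)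
        have := hp i
        have h5 : q j + t * p i ≠ 0 := by positivity
        field_simp
    · intro j i hc
      by_cases hqj : q' j = 0
      · have := supp' (j, i) hqj
        have hpi : p' i = 0 := by simpa [wt, hc] using this
        simp [hpi]
      · have := lt_of_le_of_ne (hq' j) (Ne.symm hqj)
        have := hp' i
        have h5 : q' j + t * p' i ≠ 0 := by positivity
        field_simp
  ext a b
  let c : (o × o) ⊕ (m × m) → ℂ := Sum.elim
    (fun x => (σ * (K k)ᴴ * (W' * Matrix.single x.1 x.2 ((W'ᴴ * U') x.1 x.2) * U'ᴴ)) a b)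
    (fun x => - (σ * (W * Matrix.single x.1 x.2 ((Wᴴ * U) x.1 x.2) * Uᴴ) * (K k)ᴴ) a b)
  let xx : (o × o) ⊕ (m × m) → ℝ := Sum.elim (fun x => p' x.2 / q' x.1) (fun x => p x.2 / q x.1)
  have hlin : ∀ f : ℝ → ℝ, ∑ s, c s * ((f (xx s) : ℝ) : ℂ)
      = (σ * (K k)ᴴ * hadX U' W' (fun j i => f (p' i / q' j))) a b
        - (σ * hadX U W (fun j i => f (p i / q j)) * (K k)ᴴ) a b := by
    intro f
    rw [hadX_sum, hadX_sum]
    simp only [Matrix.mul_sum, Matrix.sum_mul, Matrix.mul_smul, Matrix.smul_mul, Matrix.sum_apply,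
      Matrix.smul_apply, smul_eq_mul, Fintype.sum_sum_type, c, xx, Sum.elim_inl, Sum.elim_inr]
    rw [sub_eq_add_neg, ← Finset.sum_neg_distrib]
    congr 1
    · exact Finset.sum_congr rfl fun x _ => mul_comm _ _
    · exact Finset.sum_congr rfl fun x _ => by ring
  have hfin := resolvent_interp c xx (fun t ht => by
      rw [hlin (fun y => y / (1 + t * y)), h2 t ht, sub_self]) (by
      rintro (x | x)
      · exact div_nonneg (hp' _) (hq' _)
      · exact div_nonneg (hp _) (hq _)) Real.sqrt Real.sqrt_zero
  rw [hlin] at hfin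
  exact sub_eq_zero.mp hfin

end D
end NLB

namespace NLB
set_option linter.unusedSectionVars false
set_option linter.unusedSimpArgs false
section E
variable {κ m o α α' β β' : Type*} [Fintype κ] [Fintype m] [Fintype o] [DecidableEq m] [DecidableEq o]
  [Fintype α] [Fintype β] [DecidableEq α] [DecidableEq β]
  [Fintype α'] [Fintype β'] [DecidableEq α'] [DecidableEq β']

lemma exists_spec {M : Matrix m m ℂ} (h : M.PosSemidef) : ∃ (U : Matrix m m ℂ) (p : m → ℝ),
    IsSpec M U p ∧ (∀ i, 0 ≤ p i) ∧ vnEntropy M * Real.log 2 = - ∑ i, p i * Real.log (p i) := by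
  refine ⟨h.isHermitian.eigenvectorUnitary, h.isHermitian.eigenvalues, ⟨?_, ?_, ?_⟩,
    h.eigenvalues_nonneg, ?_⟩
  · exact Unitary.coe_star_mul_self h.isHermitian.eigenvectorUnitary
  · exact Unitary.coe_mul_star_self h.isHermitian.eigenvectorUnitary
  · conv_lhs => rw [h.isHermitian.spectral_theorem]
    rw [Unitary.conjStarAlgAut_apply]
    rfl
  · unfold vnEntropy
    rw [dif_pos h.isHermitian, neg_mul, Finset.sum_mul]
    congr 1
    refine Finset.sum_congr rfl fun i _ => ?_
    have : Real.log 2 ≠ 0 := (Real.log_pos (by norm_num)).ne'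
    rw [Real.logb]
    field_simp

/-- Swap of the two tensor factors. -/
def swp (ρ : Matrix (α × β) (α' × β') ℂ) : Matrix (β × α) (β' × α') ℂ :=
  ρ.submatrix Prod.swap Prod.swap

lemma swp_swp (ρ : Matrix (α × β) (α' × β') ℂ) : swp (swp ρ) = ρ := rfl

lemma swp_mul (ρ : Matrix (α × β) (α' × β') ℂ) {γ γ' : Type*}
    (τ : Matrix (α' × β') (γ × γ') ℂ) : swp (ρ * τ) = swp ρ * swp τ := by
  unfold swp
  exact (Matrix.submatrix_mul_equiv ρ τ Prod.swap (Equiv.prodComm β' α') Prod.swap).symm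

lemma swp_conjTranspose (ρ : Matrix (α × β) (α' × β') ℂ) : swp ρᴴ = (swp ρ)ᴴ := rfl

lemma swp_kron (A : Matrix α α' ℂ) (B : Matrix β β' ℂ) : swp (A ⊗ₖ B) = B ⊗ₖ A := by
  ext ⟨i, j⟩ ⟨i', j'⟩
  simp [swp, kroneckerMap_apply, mul_comm]

lemma ptraceRight_swp (ρ : Matrix (α × β) (α × β) ℂ) : ptraceRight (swp ρ) = ptraceLeft ρ := rfl
lemma ptraceLeft_swp (ρ : Matrix (α × β) (α × β) ℂ) : ptraceLeft (swp ρ) = ptraceRight ρ := rfl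

lemma swp_psd {ρ : Matrix (α × β) (α × β) ℂ} (h : ρ.PosSemidef) : (swp ρ).PosSemidef :=
  h.submatrix _

lemma vnEntropy_swp {ρ : Matrix (α × β) (α × β) ℂ} (h : ρ.PosSemidef) :
    vnEntropy (swp ρ) = vnEntropy ρ := by
  have h1 := h.isHermitian
  have h2 := (swp_psd h).isHermitian
  unfold vnEntropy
  rw [dif_pos h1, dif_pos h2]
  have e1 := h1.roots_charpoly_eq_eigenvalues
  have e2 := h2.roots_charpoly_eq_eigenvalues
  have e3 : (swp ρ).charpoly = ρ.charpoly := by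
    have := Matrix.charpoly_reindex (Equiv.prodComm α β) ρ
    rw [← this]; rfl
  rw [e3, e1] at e2
  have e4 := congrArg (fun s => (s.map (fun z : ℂ => z.re * Real.logb 2 z.re)).sum) e2
  simp only [Multiset.map_map, Function.comp_def] at e4
  congr 1
  simpa using e4.symm

lemma mutualInfo_swp {ρ : Matrix (α × β) (α × β) ℂ} (h : ρ.PosSemidef) :
    mutualInfo (swp ρ) = mutualInfo ρ := by
  unfold mutualInfo
  rw [vnEntropy_swp h, ptraceRight_swp, ptraceLeft_swp]
  ring

lemma ptR_left (X : Matrix α' α ℂ) (ρ : Matrix (α × β) (α' × β) ℂ) :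
    ptraceRight ((X ⊗ₖ (1 : Matrix β β ℂ)) * ρ) = X * (Matrix.of fun a a' => ∑ b, ρ (a, b) (a', b)) := by
  ext i j
  simp only [ptraceRight, of_apply, Matrix.mul_apply, Fintype.sum_prod_type, kroneckerMap_apply,
    one_apply, mul_ite, mul_one, mul_zero, ite_mul, zero_mul, Finset.sum_ite_eq, Finset.mem_univ,
    if_true, Finset.mul_sum]
  rw [Finset.sum_comm]

lemma ptR_sand (X : Matrix α' α ℂ) (Y : Matrix α α' ℂ) (ρ : Matrix (α × β) (α × β) ℂ) :
    ptraceRight ((X ⊗ₖ (1 : Matrix β β ℂ)) * ρ * (Y ⊗ₖ (1 : Matrix β β ℂ)))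
      = X * ptraceRight ρ * Y := by
  ext i j
  simp only [ptraceRight, of_apply, Matrix.mul_apply, Fintype.sum_prod_type, kroneckerMap_apply,
    one_apply, mul_ite, mul_one, mul_zero, ite_mul, zero_mul, Finset.sum_ite_eq, Finset.mem_univ,
    if_true, Finset.mul_sum, Finset.sum_mul, Finset.sum_ite_eq']
  rw [Finset.sum_comm]
  refine Finset.sum_congr rfl fun _ _ => ?_
  rw [Finset.sum_comm]

lemma ptR_cyc (B : Matrix β β ℂ) (ρ : Matrix (α × β) (α × β) ℂ) :
    ptraceRight (((1 : Matrix α α ℂ) ⊗ₖ B) * ρ) = ptraceRight (ρ * ((1 : Matrix α α ℂ) ⊗ₖ B)) := by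
  ext i j
  simp only [ptraceRight, of_apply, Matrix.mul_apply, Fintype.sum_prod_type, kroneckerMap_apply,
    one_apply, mul_ite, mul_one, mul_zero, ite_mul, zero_mul, one_mul, Finset.sum_ite_eq,
    Finset.sum_ite_irrel, Finset.sum_const_zero, Finset.mem_univ,
    if_true, Finset.mul_sum, Finset.sum_mul, Finset.sum_ite_eq']
  rw [Finset.sum_comm]
  simp only [mul_comm]

lemma ptR_conj (A : Matrix α α ℂ) (B : Matrix β β ℂ) (hB : B * Bᴴ = 1)
    (ρ : Matrix (α × β) (α × β) ℂ) :
    ptraceRight ((A ⊗ₖ B)ᴴ * ρ * (A ⊗ₖ B)) = Aᴴ * ptraceRight ρ * A := by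
  have e1 : A ⊗ₖ B = (A ⊗ₖ (1 : Matrix β β ℂ)) * ((1 : Matrix α α ℂ) ⊗ₖ B) := by
    rw [← mul_kronecker_mul]; simp
  have e2 : (A ⊗ₖ B)ᴴ = ((1 : Matrix α α ℂ) ⊗ₖ Bᴴ) * (Aᴴ ⊗ₖ (1 : Matrix β β ℂ)) := by
    rw [← mul_kronecker_mul, conjTranspose_kronecker]; simp
  have e3 : ((1 : Matrix α α ℂ) ⊗ₖ B) * ((1 : Matrix α α ℂ) ⊗ₖ Bᴴ) = 1 := by
    rw [← mul_kronecker_mul, hB]; simp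
  rw [e1, ← e1, e2, e1, ← ptR_sand]
  rw [Matrix.mul_assoc, Matrix.mul_assoc, ptR_cyc]
  simp only [Matrix.mul_assoc, e3, Matrix.mul_one]

lemma ptL_conj (A : Matrix α α ℂ) (B : Matrix β β ℂ) (hA : A * Aᴴ = 1)
    (ρ : Matrix (α × β) (α × β) ℂ) :
    ptraceLeft ((A ⊗ₖ B)ᴴ * ρ * (A ⊗ₖ B)) = Bᴴ * ptraceLeft ρ * B := by
  rw [← ptraceRight_swp, swp_mul, swp_mul, swp_conjTranspose, swp_kron, ptR_conj _ _ hA]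
  rfl

lemma ptR_psd {ρ : Matrix (α × β) (α × β) ℂ} (h : ρ.PosSemidef) : (ptraceRight ρ).PosSemidef := by
  have : ptraceRight ρ = ∑ b, ρ.submatrix (fun a => (a, b)) (fun a => (a, b)) := by
    ext i j; simp [ptraceRight, Matrix.sum_apply]
  rw [this]
  exact posSemidef_sum _ fun b _ => h.submatrix _

lemma ptL_psd {ρ : Matrix (α × β) (α × β) ℂ} (h : ρ.PosSemidef) : (ptraceLeft ρ).PosSemidef :=
  ptR_psd (swp_psd h)

lemma IsSpec.kron {A WA : Matrix α α ℂ} {B WB : Matrix β β ℂ} {a : α → ℝ} {b : β → ℝ}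
    (hA : IsSpec A WA a) (hB : IsSpec B WB b) :
    IsSpec (A ⊗ₖ B) (WA ⊗ₖ WB) (fun x => a x.1 * b x.2) := by
  obtain ⟨a1, a2, rfl⟩ := hA
  obtain ⟨b1, b2, rfl⟩ := hB
  refine ⟨?_, ?_, ?_⟩
  · rw [conjTranspose_kronecker, ← mul_kronecker_mul, a1, b1, one_kronecker_one]
  · rw [conjTranspose_kronecker, ← mul_kronecker_mul, a2, b2, one_kronecker_one]
  · rw [conjTranspose_kronecker, mul_kronecker_mul, mul_kronecker_mul, diagonal_kronecker_diagonal]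
    simp

lemma wt_sum_right {ρ U W : Matrix m m ℂ} {p : m → ℝ} (h : IsSpec ρ U p) (x : m) :
    ((∑ k, wt U W p (x, k) : ℝ) : ℂ) = (Wᴴ * ρ * W) x x := by
  obtain ⟨h1, h2, rfl⟩ := h
  have : Wᴴ * (U * diagonal (fun i => (p i : ℂ)) * Uᴴ) * W
      = (Wᴴ * U) * diagonal (fun i => (p i : ℂ)) * (Wᴴ * U)ᴴ := by
    simp [Matrix.mul_assoc]
  rw [this, Matrix.mul_apply]
  push_cast
  refine Finset.sum_congr rfl fun k _ => ?_
  simp only [wt, mul_diagonal, conjTranspose_apply, Complex.ofReal_mul, ← Complex.mul_conj,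
    Complex.star_def]
  ring

lemma wt_sum_left {ρ U W : Matrix m m ℂ} {p : m → ℝ} (h : IsSpec ρ U p) (hW : W * Wᴴ = 1) (k : m) :
    ∑ x, wt U W p (x, k) = p k := by
  have e : (Wᴴ * U)ᴴ * (Wᴴ * U) = 1 := by
    rw [conjTranspose_mul, conjTranspose_conjTranspose, Matrix.mul_assoc, ← Matrix.mul_assoc W, hW,
      Matrix.one_mul, h.1]
  have e2 := congrFun (congrFun e k) k
  rw [Matrix.mul_apply, one_apply_eq] at e2
  have e3 : ∑ x, Complex.normSq ((Wᴴ * U) x k) = 1 := by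
    have : ((∑ x, Complex.normSq ((Wᴴ * U) x k) : ℝ) : ℂ) = 1 := by
      rw [← e2]; push_cast
      refine Finset.sum_congr rfl fun x _ => ?_
      rw [← Complex.mul_conj, conjTranspose_apply, Complex.star_def, mul_comm]
    exact_mod_cast this
  simp only [wt, ← Finset.sum_mul, e3, one_mul]

lemma wt_nonneg {U W : Matrix m m ℂ} {p : m → ℝ} (hp : ∀ i, 0 ≤ p i) (x : m × m) :
    0 ≤ wt U W p x := mul_nonneg (Complex.normSq_nonneg _) (hp _)

lemma spec_diag {A W : Matrix m m ℂ} {a : m → ℝ} (h : IsSpec A W a) (i : m) :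
    (Wᴴ * A * W) i i = a i := by
  obtain ⟨h1, h2, rfl⟩ := h
  simp only [Matrix.mul_assoc, h1, Matrix.mul_one]
  rw [← Matrix.mul_assoc, h1, Matrix.one_mul, diagonal_apply_eq]

theorem mi_spec {ρ U : Matrix (α × β) (α × β) ℂ} {p : α × β → ℝ} {WA : Matrix α α ℂ}
    {WB : Matrix β β ℂ} {a : α → ℝ} {b : β → ℝ}
    (sρ : IsSpec ρ U p) (sA : IsSpec (ptraceRight ρ) WA a) (sB : IsSpec (ptraceLeft ρ) WB b)
    (hp : ∀ i, 0 ≤ p i)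
    (eρ : vnEntropy ρ * Real.log 2 = - ∑ i, p i * Real.log (p i))
    (eA : vnEntropy (ptraceRight ρ) * Real.log 2 = - ∑ i, a i * Real.log (a i))
    (eB : vnEntropy (ptraceLeft ρ) * Real.log 2 = - ∑ i, b i * Real.log (b i)) :
    (∀ x, a x.1.1 * b x.1.2 = 0 → wt U (WA ⊗ₖ WB) p x = 0) ∧
    mutualInfo ρ * Real.log 2 = ∑ x, wt U (WA ⊗ₖ WB) p x * Real.log (p x.2)
      - ∑ x, wt U (WA ⊗ₖ WB) p x * Real.log (a x.1.1 * b x.1.2) := by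
  have sAB := sA.kron sB
  set w := wt U (WA ⊗ₖ WB) p with hw
  have hA : ∀ i, ∑ j, ∑ k, w ((i, j), k) = a i := by
    intro i
    have := spec_diag sA i
    rw [← ptR_conj WA WB sB.2.1] at this
    have h2 : ((∑ j, ∑ k, w ((i, j), k) : ℝ) : ℂ) = a i := by
      rw [← this]
      simp only [ptraceRight, of_apply, ← wt_sum_right sρ, hw]
      push_cast; rfl
    exact_mod_cast h2
  have hB : ∀ j, ∑ i, ∑ k, w ((i, j), k) = b j := by
    intro i
    have := spec_diag sB i
    rw [← ptL_conj WA WB sA.2.1] at this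
    have h2 : ((∑ j, ∑ k, w ((j, i), k) : ℝ) : ℂ) = b i := by
      rw [← this]
      simp only [ptraceLeft, of_apply, ← wt_sum_right sρ, hw]
      push_cast; rfl
    exact_mod_cast h2
  have w0 : ∀ x, 0 ≤ w x := wt_nonneg hp
  have supA : ∀ x, a x.1.1 = 0 → w x = 0 := by
    rintro ⟨⟨i, j⟩, k⟩ h
    have h1 := hA i
    rw [h] at h1
    have h2 := (Finset.sum_eq_zero_iff_of_nonneg (fun j _ => Finset.sum_nonneg fun k _ => w0 _)).mp h1 j
      (Finset.mem_univ _)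
    exact (Finset.sum_eq_zero_iff_of_nonneg (fun k _ => w0 _)).mp h2 k (Finset.mem_univ _)
  have supB : ∀ x, b x.1.2 = 0 → w x = 0 := by
    rintro ⟨⟨i, j⟩, k⟩ h
    have h1 := hB j
    rw [h] at h1
    have h2 := (Finset.sum_eq_zero_iff_of_nonneg (fun j _ => Finset.sum_nonneg fun k _ => w0 _)).mp h1 i
      (Finset.mem_univ _)
    exact (Finset.sum_eq_zero_iff_of_nonneg (fun k _ => w0 _)).mp h2 k (Finset.mem_univ _)
  refine ⟨fun x h => (mul_eq_zero.mp h).elim (supA x) (supB x), ?_⟩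
  have f1 : ∑ x, w x * Real.log (p x.2) = ∑ k, p k * Real.log (p k) := by
    rw [Fintype.sum_prod_type_right]
    refine Finset.sum_congr rfl fun k _ => ?_
    show ∑ x, w (x, k) * Real.log (p k) = _
    rw [← Finset.sum_mul, wt_sum_left sρ sAB.2.1]
  have f2 : ∑ x, w x * Real.log (a x.1.1 * b x.1.2)
      = ∑ i, a i * Real.log (a i) + ∑ j, b j * Real.log (b j) := by
    have : ∀ x, w x * Real.log (a x.1.1 * b x.1.2)
        = w x * Real.log (a x.1.1) + w x * Real.log (b x.1.2) := by
      intro x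
      by_cases h1 : a x.1.1 = 0
      · simp [supA x h1]
      by_cases h2 : b x.1.2 = 0
      · simp [supB x h2]
      rw [Real.log_mul h1 h2, mul_add]
    simp only [this, Finset.sum_add_distrib, Fintype.sum_prod_type]
    congr 1
    · refine Finset.sum_congr rfl fun i _ => ?_
      rw [← hA i, Finset.sum_mul]
      simp only [Finset.sum_mul, Fintype.sum_prod_type]
    · rw [Finset.sum_comm]
      refine Finset.sum_congr rfl fun i _ => ?_
      rw [← hB i, Finset.sum_mul]
      simp only [Finset.sum_mul, Fintype.sum_prod_type]
  rw [f1, f2, mutualInfo, sub_mul, add_mul, eρ, eA, eB]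
  ring

end E
end NLB

namespace NLB
set_option linter.unusedSectionVars false
set_option linter.unusedSimpArgs false
section F
variable {κ m o β : Type*} [Fintype κ] [Fintype m] [Fintype o] [DecidableEq m] [DecidableEq o]
  [Fintype β] [DecidableEq β]

/-- Spectral calculus: `U diag(f) Uᴴ`. -/
noncomputable def fspec (U : Matrix m m ℂ) (f : m → ℝ) : Matrix m m ℂ :=
  U * diagonal (fun i => (f i : ℂ)) * Uᴴ

lemma fspec_isSpec {M U : Matrix m m ℂ} {p : m → ℝ} (h : IsSpec M U p) (f : m → ℝ) :
    IsSpec (fspec U f) U f := ⟨h.1, h.2.1, rfl⟩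

lemma fspec_self {M U : Matrix m m ℂ} {p : m → ℝ} (h : IsSpec M U p) : fspec U p = M := h.2.2.symm

lemma fspec_mul {U : Matrix m m ℂ} (h : Uᴴ * U = 1) (f g : m → ℝ) :
    fspec U f * fspec U g = fspec U (fun i => f i * g i) := by
  unfold fspec
  have : diagonal (fun i => ((f i * g i : ℝ) : ℂ))
      = diagonal (fun i => (f i : ℂ)) * diagonal (fun i => (g i : ℂ)) := by
    rw [diagonal_mul_diagonal]; simp
  rw [this]
  simp only [Matrix.mul_assoc]
  rw [← Matrix.mul_assoc Uᴴ U, h, Matrix.one_mul]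

lemma fspec_herm (U : Matrix m m ℂ) (f : m → ℝ) : (fspec U f)ᴴ = fspec U f := by
  unfold fspec
  simp only [conjTranspose_mul, conjTranspose_conjTranspose, diagonal_conjTranspose,
    Matrix.mul_assoc]
  congr 3
  ext i; simp

lemma fspec_kron (U : Matrix m m ℂ) (V : Matrix β β ℂ) (f : m → ℝ) (g : β → ℝ) :
    fspec (U ⊗ₖ V) (fun x => f x.1 * g x.2) = fspec U f ⊗ₖ fspec V g := by
  unfold fspec
  rw [conjTranspose_kronecker, mul_kronecker_mul, mul_kronecker_mul, diagonal_kronecker_diagonal]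
  simp

/-- `K ⊗ 1`. -/
noncomputable def lft (β : Type*) [DecidableEq β] (K : κ → Matrix o m ℂ) :
    κ → Matrix (o × β) (m × β) ℂ :=
  fun k => K k ⊗ₖ (1 : Matrix β β ℂ)

lemma lft_sum (K : κ → Matrix o m ℂ) (hK : ∑ k, (K k)ᴴ * K k = 1) :
    ∑ k, (lft β K k)ᴴ * lft β K k = 1 := by
  simp only [lft, conjTranspose_kronecker, ← mul_kronecker_mul, conjTranspose_one, Matrix.one_mul]
  rw [← one_kronecker_one, ← hK]
  ext ⟨i, j⟩ ⟨i', j'⟩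
  simp [Matrix.sum_apply, kroneckerMap_apply, Finset.sum_mul]

lemma chan_lft_kron (K : κ → Matrix o m ℂ) (A : Matrix m m ℂ) (B : Matrix β β ℂ) :
    chan (lft β K) (A ⊗ₖ B) = chan K A ⊗ₖ B := by
  simp only [chan, lft, conjTranspose_kronecker, ← mul_kronecker_mul, conjTranspose_one,
    Matrix.one_mul, Matrix.mul_one]
  ext ⟨i, j⟩ ⟨i', j'⟩
  simp [Matrix.sum_apply, kroneckerMap_apply, Finset.sum_mul]

lemma ptR_sum {ι : Type*} (s : Finset ι) (f : ι → Matrix (m × β) (m × β) ℂ) :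
    ptraceRight (∑ i ∈ s, f i) = ∑ i ∈ s, ptraceRight (f i) := by
  ext i j
  simp only [ptraceRight, of_apply, Matrix.sum_apply]
  rw [Finset.sum_comm]

lemma ptR_chan (K : κ → Matrix o m ℂ) (ρ : Matrix (m × β) (m × β) ℂ) :
    ptraceRight (chan (lft β K) ρ) = chan K (ptraceRight ρ) := by
  simp only [chan, lft, conjTranspose_kronecker, conjTranspose_one, ptR_sum, ptR_sand]

lemma ptL_chan (K : κ → Matrix o m ℂ) (hK : ∑ k, (K k)ᴴ * K k = 1)
    (ρ : Matrix (m × β) (m × β) ℂ) :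
    ptraceLeft (chan (lft β K) ρ) = ptraceLeft ρ := by
  have h : ∀ x x', ∑ k, ∑ i, K k i x * star (K k i x') = if x = x' then 1 else 0 := by
    intro x x'
    have := congrFun (congrFun hK x') x
    simp only [Matrix.sum_apply, Matrix.mul_apply, conjTranspose_apply] at this
    rw [one_apply] at this
    simp only [mul_comm, eq_comm (a := x)] at this ⊢
    exact this
  ext j j'
  simp only [ptraceLeft, of_apply, chan, lft, Matrix.sum_apply, Matrix.mul_apply,
    Fintype.sum_prod_type, kroneckerMap_apply, conjTranspose_apply,
    one_apply, mul_ite, mul_one, mul_zero, ite_mul, zero_mul, Finset.sum_ite_eq, Finset.mem_univ,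
    if_true, Finset.mul_sum, Finset.sum_mul, Finset.sum_ite_eq', apply_ite star, star_zero]
  have e : ∀ i k x' x, K k i x * ρ (x, j) (x', j') * star (K k i x')
      = (K k i x * star (K k i x')) * ρ (x, j) (x', j') := fun _ _ _ _ => by ring
  calc _ = ∑ x, ∑ x', (∑ k, ∑ i, K k i x * star (K k i x')) * ρ (x, j) (x', j') := by
        simp only [e, Finset.sum_mul]
        rw [Finset.sum_comm]
        simp only [Finset.sum_comm (s := (Finset.univ : Finset o)) (t := (Finset.univ : Finset m))]
        simp only [Finset.sum_comm (s := (Finset.univ : Finset κ)) (t := (Finset.univ : Finset m))]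
        rw [Finset.sum_comm]
    _ = _ := by simp only [h]; simp

/-- Slices of a bipartite operator. -/
noncomputable def slc (ρ : Matrix (m × β) (m × β) ℂ) (M : Matrix β β ℂ) : Matrix m m ℂ :=
  ptraceRight (ρ * ((1 : Matrix m m ℂ) ⊗ₖ M))

lemma slc_sand (X : Matrix o m ℂ) (Y : Matrix m o ℂ) (ρ : Matrix (m × β) (m × β) ℂ)
    (M : Matrix β β ℂ) :
    slc ((X ⊗ₖ (1 : Matrix β β ℂ)) * ρ * (Y ⊗ₖ (1 : Matrix β β ℂ))) M = X * slc ρ M * Y := by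
  unfold slc
  rw [← ptR_sand, Matrix.mul_assoc, ← mul_kronecker_mul]
  simp only [Matrix.mul_assoc, ← mul_kronecker_mul, Matrix.one_mul, Matrix.mul_one]

lemma slc_sum {ι : Type*} (s : Finset ι) (f : ι → Matrix (m × β) (m × β) ℂ) (M : Matrix β β ℂ) :
    slc (∑ i ∈ s, f i) M = ∑ i ∈ s, slc (f i) M := by
  unfold slc
  rw [Finset.sum_mul, ptR_sum]

lemma slc_chan (K : κ → Matrix o m ℂ) (ρ : Matrix (m × β) (m × β) ℂ) (M : Matrix β β ℂ) :
    slc (chan (lft β K) ρ) M = chan K (slc ρ M) := by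
  simp only [chan, slc_sum, lft, conjTranspose_kronecker, conjTranspose_one, slc_sand]

/-- Monotonicity of mutual information and the Petz recovery condition. -/
theorem mi_dpi (K : κ → Matrix o m ℂ) (hK : ∑ k, (K k)ᴴ * K k = 1)
    {ρ : Matrix (m × β) (m × β) ℂ} (hρ : ρ.PosSemidef) {WA : Matrix m m ℂ} {a : m → ℝ}
    (sA : IsSpec (ptraceRight ρ) WA a) (ha : ∀ i, 0 ≤ a i)
    (eA : vnEntropy (ptraceRight ρ) * Real.log 2 = - ∑ i, a i * Real.log (a i)) :
    mutualInfo (chan (lft β K) ρ) ≤ mutualInfo ρ ∧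
    (mutualInfo (chan (lft β K) ρ) = mutualInfo ρ → ∃ w : Matrix o o ℂ, wᴴ = w ∧
      (∀ k, w * chan K (ptraceRight ρ) * w * K k * fspec WA (fun i => √(a i))
        = K k * fspec WA (fun i => √(a i))) ∧
      ∀ M, fspec WA (fun i => √(a i)) * dual K (w * chan K (slc ρ M) * w)
        * fspec WA (fun i => √(a i)) = slc ρ M) := by
  obtain ⟨U, p, sρ, hp, eρ⟩ := exists_spec hρ
  obtain ⟨WB, b, sB, hb, eB⟩ := exists_spec (ptL_psd hρ)
  have hρ' := chan_psd (lft β K) hρ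
  obtain ⟨U', p', sρ', hp', eρ'⟩ := exists_spec hρ'
  obtain ⟨WA', a', sA', ha', eA'⟩ := exists_spec (ptR_psd hρ')
  have sB' : IsSpec (ptraceLeft (chan (lft β K) ρ)) WB b := by rwa [ptL_chan K hK]
  have eB' : vnEntropy (ptraceLeft (chan (lft β K) ρ)) * Real.log 2
      = - ∑ i, b i * Real.log (b i) := by rwa [ptL_chan K hK]
  obtain ⟨supp, hI⟩ := mi_spec sρ sA sB hp eρ eA eB
  obtain ⟨supp', hI'⟩ := mi_spec sρ' sA' sB' hp' eρ' eA' eB'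
  have sAB := sA.kron sB
  have sAB' := sA'.kron sB'
  rw [ptL_chan K hK, ptR_chan, ← chan_lft_kron] at sAB'
  have sA'' := sA'
  rw [ptR_chan] at sA''
  have hd := dpi_spec (lft β K) (lft_sum K hK) hρ
    ((ptR_psd hρ).kronecker (ptL_psd hρ)) sρ sAB sρ' sAB' hp
    (fun x => mul_nonneg (ha _) (hb _)) hp' (fun x => mul_nonneg (ha' _) (hb _)) supp supp'
  rw [← hI, ← hI'] at hd
  have hlog : 0 < Real.log 2 := Real.log_pos (by norm_num)
  refine ⟨le_of_mul_le_mul_right hd.1 hlog, fun heq => ?_⟩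
  have hk := hd.2 (by rw [heq])
  set q := fspec WA (fun i => √(a i)) with hq
  set qB := fspec WB (fun i => √(b i)) with hqB
  set w := fspec WA' (fun i => 1 / √(a' i)) with hw
  set wB := fspec WB (fun i => 1 / √(b i)) with hwB
  set r := fspec U (fun i => √(p i)) with hr
  set r' := fspec U' (fun i => √(p' i)) with hr'
  have dsq : ∀ x : ℝ, 0 ≤ x → 1 / √x * x = √x := fun x hx => by
    rw [one_div, inv_mul_eq_div, Real.div_sqrt]
  -- the intertwining relation with square roots
  have hstep : ∀ k, (q ⊗ₖ qB) * (lft β K k)ᴴ * ((w ⊗ₖ wB) * r') = r * (lft β K k)ᴴ := by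
    intro k
    have h1 := congrArg (fun Z => (fspec (WA ⊗ₖ WB) (fun x => 1 / √(a x.1 * b x.2))) * Z) (hk k)
    simp only [← Matrix.mul_assoc] at h1
    have e1 : fspec (WA ⊗ₖ WB) (fun x => 1 / √(a x.1 * b x.2)) * (ptraceRight ρ ⊗ₖ ptraceLeft ρ)
        = q ⊗ₖ qB := by
      rw [hq, hqB, ← fspec_kron]
      conv_lhs => rw [← fspec_self sAB]
      rw [fspec_mul sAB.1]
      congr 1
      ext x
      rw [dsq _ (mul_nonneg (ha _) (hb _)), Real.sqrt_mul (ha _)]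
    rw [e1] at h1
    have e2 : (q ⊗ₖ qB) * hadX U (WA ⊗ₖ WB) (fun j i => √(p i / (a j.1 * b j.2))) = r := by
      rw [hq, hqB, ← fspec_kron, hadX_left (fspec_isSpec sAB _)]
      rw [hr, ← hadX_rho (W := WA ⊗ₖ WB) (fspec_isSpec sρ (fun i => √(p i))) sAB.2.1]
      apply hadX_congr
      intro j i hc
      by_cases hj : a j.1 * b j.2 = 0
      · have hpi : p i = 0 := by simpa [wt, hc] using supp (j, i) hj
        simp [hpi]
      · have h0 := mul_nonneg (ha j.1) (hb j.2)
        rw [← Real.sqrt_mul (ha _), ← Real.sqrt_mul h0]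
        congr 1
        rw [mul_comm, div_mul_cancel₀ _ hj]
    have e3 : hadX U' (WA' ⊗ₖ WB) (fun j i => √(p' i / (a' j.1 * b j.2))) = (w ⊗ₖ wB) * r' := by
      rw [hr', ← hadX_rho (W := WA' ⊗ₖ WB) (fspec_isSpec sρ' (fun i => √(p' i))) sAB'.2.1]
      rw [hw, hwB, ← fspec_kron, hadX_left (fspec_isSpec sAB' _)]
      congr 1
      ext j i
      rw [Real.sqrt_div (hp' _), Real.sqrt_mul (ha' _)]
      simp only [div_eq_mul_inv, mul_inv]
      ring
    rw [e2, e3] at h1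
    exact h1
  have rr : r * r = ρ := by
    rw [hr, fspec_mul sρ.1]
    conv_rhs => rw [← fspec_self sρ]
    congr 1; ext i; exact Real.mul_self_sqrt (hp i)
  have rr' : r' * r' = chan (lft β K) ρ := by
    rw [hr', fspec_mul sρ'.1]
    conv_rhs => rw [← fspec_self sρ']
    congr 1; ext i; exact Real.mul_self_sqrt (hp' i)
  have Hq : qᴴ = q := fspec_herm _ _
  have HqB : qBᴴ = qB := fspec_herm _ _
  have Hw : wᴴ = w := fspec_herm _ _
  have HwB : wBᴴ = wB := fspec_herm _ _
  have Hr : rᴴ = r := fspec_herm _ _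
  have Hr' : r'ᴴ = r' := fspec_herm _ _
  set P := qB * wB with hP
  have cP : wB * qB = P := by
    rw [hP, hqB, hwB, fspec_mul sB.1, fspec_mul sB.1]; congr 1; ext i; ring
  have PP : P * P = P := by
    rw [hP, hqB, hwB, fspec_mul sB.1, fspec_mul sB.1]; congr 1; ext i
    by_cases h : √(b i) = 0
    · simp [h]
    · field_simp
  have rec0 : ρ = ∑ k, ((q * (K k)ᴴ * w) ⊗ₖ P) * chan (lft β K) ρ * ((w * K k * q) ⊗ₖ P) := by
    have h1 : ∀ k, ((q * (K k)ᴴ * w) ⊗ₖ P) * chan (lft β K) ρ * ((w * K k * q) ⊗ₖ P)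
        = r * ((lft β K k)ᴴ * lft β K k) * r := by
      intro k
      have h2 := hstep k
      have h3 := congrArg conjTranspose h2
      simp only [conjTranspose_mul, conjTranspose_conjTranspose, conjTranspose_kronecker,
        Hq, HqB, Hw, HwB, Hr, Hr'] at h3
      have h4 : ((q * (K k)ᴴ * w) ⊗ₖ P) * r' = r * (lft β K k)ᴴ := by
        rw [← h2]
        simp only [lft, conjTranspose_kronecker, conjTranspose_one, ← Matrix.mul_assoc,
          ← mul_kronecker_mul, Matrix.mul_one, hP]
      have h5 : r' * ((w * K k * q) ⊗ₖ P) = lft β K k * r := by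
        rw [← h3]
        simp only [lft, Matrix.mul_assoc,
          ← mul_kronecker_mul, Matrix.one_mul, Matrix.mul_one, cP]
      rw [← rr', ← Matrix.mul_assoc, h4, Matrix.mul_assoc, h5]
      simp only [Matrix.mul_assoc]
    simp only [h1]
    rw [← Finset.sum_mul, ← Finset.mul_sum, lft_sum K hK, Matrix.mul_one, rr]
  have ρP : ρ * ((1 : Matrix m m ℂ) ⊗ₖ P) = ρ := by
    conv_lhs => rw [rec0]
    conv_rhs => rw [rec0]
    rw [Finset.sum_mul]
    refine Finset.sum_congr rfl fun k _ => ?_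
    rw [Matrix.mul_assoc, ← mul_kronecker_mul, PP, Matrix.mul_one]
  have Pρ : ((1 : Matrix m m ℂ) ⊗ₖ P) * ρ = ρ := by
    conv_lhs => rw [rec0]
    conv_rhs => rw [rec0]
    rw [Finset.mul_sum]
    refine Finset.sum_congr rfl fun k _ => ?_
    rw [← Matrix.mul_assoc, ← Matrix.mul_assoc, ← mul_kronecker_mul, PP, Matrix.one_mul]
  have ρP' : chan (lft β K) ρ * ((1 : Matrix o o ℂ) ⊗ₖ P) = chan (lft β K) ρ := by
    conv_rhs => rw [← ρP]
    simp only [chan, Finset.sum_mul, lft, conjTranspose_kronecker, conjTranspose_one,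
      Matrix.mul_assoc, ← mul_kronecker_mul, Matrix.one_mul, Matrix.mul_one]
  have Pρ' : ((1 : Matrix o o ℂ) ⊗ₖ P) * chan (lft β K) ρ = chan (lft β K) ρ := by
    conv_rhs => rw [← Pρ]
    simp only [chan, Finset.mul_sum, lft, conjTranspose_kronecker, conjTranspose_one,
      ← Matrix.mul_assoc, ← mul_kronecker_mul, Matrix.one_mul, Matrix.mul_one]
  have rec1 : ρ = ∑ k, ((q * (K k)ᴴ * w) ⊗ₖ (1 : Matrix β β ℂ)) * chan (lft β K) ρ
      * ((w * K k * q) ⊗ₖ (1 : Matrix β β ℂ)) := by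
    conv_lhs => rw [rec0]
    refine Finset.sum_congr rfl fun k _ => ?_
    have f1 : (q * (K k)ᴴ * w) ⊗ₖ P
        = ((q * (K k)ᴴ * w) ⊗ₖ (1 : Matrix β β ℂ)) * ((1 : Matrix o o ℂ) ⊗ₖ P) := by
      rw [← mul_kronecker_mul, Matrix.mul_one, Matrix.one_mul]
    have f2 : (w * K k * q) ⊗ₖ P
        = ((1 : Matrix o o ℂ) ⊗ₖ P) * ((w * K k * q) ⊗ₖ (1 : Matrix β β ℂ)) := by
      rw [← mul_kronecker_mul, Matrix.mul_one, Matrix.one_mul]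
    rw [f1, f2, Matrix.mul_assoc _ _ (chan (lft β K) ρ), Pρ', ← Matrix.mul_assoc,
      Matrix.mul_assoc _ (chan (lft β K) ρ), ρP']
  refine ⟨w, Hw, ?_, ?_⟩
  · -- support condition
    have qq : q * q = ptraceRight ρ := by
      rw [hq, fspec_mul sA.1]
      conv_rhs => rw [← fspec_self sA]
      congr 1; ext i; exact Real.mul_self_sqrt (ha i)
    set ω := chan K (ptraceRight ρ) with hω
    have hωs : ω = fspec WA' a' := (fspec_self sA'').symm
    have hPw : w * ω * w * ω = ω := by
      rw [hωs, hw, fspec_mul sA'.1, fspec_mul sA'.1, fspec_mul sA'.1]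
      congr 1; ext i
      by_cases h : a' i = 0
      · simp [h]
      · have h1 : 0 < a' i := lt_of_le_of_ne (ha' i) (Ne.symm h)
        have h2 : √(a' i) ≠ 0 := (Real.sqrt_pos.mpr h1).ne'
        have h3 := Real.mul_self_sqrt (ha' i)
        field_simp
        rw [pow_two, h3]
    have hz : (1 - w * ω * w) * ω = 0 := by rw [Matrix.sub_mul, Matrix.one_mul, hPw, sub_self]
    set Z := 1 - w * ω * w with hZ
    have hsum : ∑ k, (Z * K k * (ptraceRight ρ) * (Z * K k)ᴴ).trace.re = 0 := by
      have h1 : ∑ k, (Z * K k * (ptraceRight ρ) * (Z * K k)ᴴ) = Z * ω * Zᴴ := by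
        rw [hω, chan, Finset.mul_sum, Finset.sum_mul]
        refine Finset.sum_congr rfl fun k _ => ?_
        simp only [conjTranspose_mul, Matrix.mul_assoc]
      rw [← Complex.re_sum, ← trace_sum, h1, hz]
      simp
    intro k
    have h1 := (Finset.sum_eq_zero_iff_of_nonneg
      (fun k _ => psd_tr_nonneg (ptR_psd hρ) (Z * K k))).mp hsum k (Finset.mem_univ k)
    have h2 := psd_kill_re (ptR_psd hρ) _ h1
    have h3 : Z * K k * q = 0 := by
      rw [← qq] at h2
      have h4 : (Z * K k * q) * (Z * K k * q)ᴴ = 0 := by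
        rw [conjTranspose_mul, Hq, ← Matrix.mul_assoc, Matrix.mul_assoc (Z * K k), h2,
          Matrix.zero_mul]
      exact self_mul_conjTranspose_eq_zero.mp h4
    rw [hZ, Matrix.sub_mul, Matrix.sub_mul, Matrix.one_mul, sub_eq_zero] at h3
    exact h3.symm
  · intro M
    have h1 := congrArg (fun Z => slc Z M) rec1
    simp only [slc_sum, slc_sand, slc_chan] at h1
    rw [h1, dual, Finset.mul_sum, Finset.sum_mul]
    refine Finset.sum_congr rfl fun k _ => ?_
    rw [← h1]
    simp only [Matrix.mul_assoc]

end F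
end NLB

namespace NLB
set_option linter.unusedSectionVars false
set_option linter.unusedSimpArgs false
section G
variable {κ n o o' : Type*} [Fintype κ] [Fintype n] [Fintype o] [DecidableEq n] [DecidableEq o]
  [Fintype o'] [DecidableEq o']

/-- Kraus operators of the (faithful) recovery map composed with the channel. -/
noncomputable def VV (K : κ → Matrix o n ℂ) (w : Matrix o o ℂ) (q : Matrix n n ℂ) :
    κ × κ → Matrix n n ℂ :=
  fun x => q * ((K x.2)ᴴ * w * K x.1)

lemma dual_VV (K : κ → Matrix o n ℂ) (w : Matrix o o ℂ) (q : Matrix n n ℂ) (hw : wᴴ = w)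
    (hq : qᴴ = q) (x : Matrix n n ℂ) :
    dual (VV K w q) x = dual K (w * chan K (q * x * q) * w) := by
  simp only [dual, chan, VV, Fintype.sum_prod_type, Matrix.mul_sum, Matrix.sum_mul,
    conjTranspose_mul, conjTranspose_conjTranspose, hw, hq, Matrix.mul_assoc]

lemma chan_VV (K : κ → Matrix o n ℂ) (w : Matrix o o ℂ) (q : Matrix n n ℂ) (hw : wᴴ = w)
    (hq : qᴴ = q) (x : Matrix n n ℂ) :
    chan (VV K w q) x = q * dual K (w * chan K x * w) * q := by
  simp only [dual, chan, VV, Fintype.sum_prod_type_right, Matrix.mul_sum, Matrix.sum_mul,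
    conjTranspose_mul, conjTranspose_conjTranspose, hw, hq, Matrix.mul_assoc]

section
variable {K : κ → Matrix o n ℂ} {w : Matrix o o ℂ} {q qi : Matrix n n ℂ}
  

lemma dual_omega (hK : ∑ k, (K k)ᴴ * K k = 1) (hw : wᴴ = w) (hq : qᴴ = q)
    (hω : ∀ k, w * chan K (q * q) * w * K k = K k) : dual K (w * chan K (q * q) * w) = 1 := by
  rw [← hK, dual]
  refine Finset.sum_congr rfl fun k _ => ?_
  rw [Matrix.mul_assoc, hω]

lemma VV_one (hK : ∑ k, (K k)ᴴ * K k = 1) (hw : wᴴ = w) (hq : qᴴ = q)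
    (hω : ∀ k, w * chan K (q * q) * w * K k = K k) : ∑ x, (VV K w q x)ᴴ * VV K w q x = 1 := by
  have := dual_VV K w q hw hq 1
  rw [Matrix.mul_one, dual_omega hK hw hq hω] at this
  simpa [dual] using this

lemma fix_comm (hK : ∑ k, (K k)ᴴ * K k = 1) (hw : wᴴ = w) (hq : qᴴ = q)
    (hω : ∀ k, w * chan K (q * q) * w * K k = K k)
    (hi : q * qi = 1) {x : Matrix n n ℂ} (hx : dual (VV K w q) x = x) (kl : κ × κ) :
    x * VV K w q kl = VV K w q kl * x := by
  have hx' : dual (VV K w q) xᴴ = xᴴ := by rw [← dual_conjTranspose, hx]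
  have h := ks_identity (VV K w q) (VV_one hK hw hq hω) (q * q) xᴴ
  rw [chan_VV K w q hw hq, dual_omega hK hw hq hω, Matrix.mul_one, hx', sub_self] at h
  simp only [conjTranspose_conjTranspose] at h
  have psd : (q * q).PosSemidef := by
    have := posSemidef_conjTranspose_mul_self q
    rwa [hq] at this
  have h2 := congrArg Complex.re h
  rw [Complex.re_sum] at h2
  have h3 := (Finset.sum_eq_zero_iff_of_nonneg
    (fun k _ => psd_tr_nonneg psd (x * VV K w q k - VV K w q k * x))).mp h2 kl (Finset.mem_univ _)
  have h4 := psd_kill_re psd _ h3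
  have h5 := congrArg (fun Z => Z * qi * qi) h4
  rw [Matrix.zero_mul, Matrix.zero_mul, Matrix.mul_assoc, Matrix.mul_assoc, Matrix.mul_assoc q q,
    ← Matrix.mul_assoc q qi qi, hi, Matrix.one_mul, hi, Matrix.mul_one] at h5
  exact sub_eq_zero.mp h5

lemma comm_fix (hK : ∑ k, (K k)ᴴ * K k = 1) (hw : wᴴ = w) (hq : qᴴ = q)
    (hω : ∀ k, w * chan K (q * q) * w * K k = K k)
    {x : Matrix n n ℂ} (h : ∀ kl, x * VV K w q kl = VV K w q kl * x) :
    dual (VV K w q) x = x := by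
  unfold dual
  simp only [Matrix.mul_assoc, h]
  simp only [← Matrix.mul_assoc]
  rw [← Finset.sum_mul, VV_one hK hw hq hω, Matrix.one_mul]

lemma fix_comm' (hK : ∑ k, (K k)ᴴ * K k = 1) (hw : wᴴ = w) (hq : qᴴ = q)
    (hω : ∀ k, w * chan K (q * q) * w * K k = K k)
    (hi : q * qi = 1) {x : Matrix n n ℂ} (hx : dual (VV K w q) x = x) (k l : κ) :
    x * ((K k)ᴴ * w * K l * q) = (K k)ᴴ * w * K l * q * x := by
  have hx' : dual (VV K w q) xᴴ = xᴴ := by rw [← dual_conjTranspose, hx]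
  have h := congrArg conjTranspose (fix_comm hK hw hq hω hi hx' (k, l))
  simp only [VV, conjTranspose_mul, conjTranspose_conjTranspose, hw, hq, Matrix.mul_assoc] at h ⊢
  exact h.symm

lemma fix_conj (hK : ∑ k, (K k)ᴴ * K k = 1) (hw : wᴴ = w) (hq : qᴴ = q)
    (hω : ∀ k, w * chan K (q * q) * w * K k = K k)
    (hi : q * qi = 1) (hi' : qi * q = 1) {x : Matrix n n ℂ} (hx : dual (VV K w q) x = x) :
    dual (VV K w q) (q * x * qi) = q * x * qi := by
  apply comm_fix hK hw hq hω
  rintro ⟨k, l⟩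
  have h := fix_comm' hK hw hq hω hi hx l k
  simp only [VV]
  set N := (K l)ᴴ * w * K k
  calc q * x * qi * (q * N) = q * x * (qi * q) * N := by simp only [Matrix.mul_assoc]
    _ = q * (x * (N * q)) * qi := by
      rw [hi', Matrix.mul_one]; simp only [Matrix.mul_assoc, hi, Matrix.mul_one]
    _ = _ := by rw [h]; simp only [Matrix.mul_assoc]

lemma fix_G (hK : ∑ k, (K k)ᴴ * K k = 1) (hw : wᴴ = w) (hq : qᴴ = q)
    (hω : ∀ k, w * chan K (q * q) * w * K k = K k)
    (hi : q * qi = 1) (hi' : qi * q = 1) (hqi : qiᴴ = qi) {x : Matrix n n ℂ} (xh : xᴴ = x)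
    (hx : dual (VV K w q) x = x) :
    dual (VV K w q) (q * x * qi - qi * x * q) = q * x * qi - qi * x * q := by
  have h1 := fix_conj hK hw hq hω hi hi' hx
  have h2 := congrArg conjTranspose h1
  rw [dual_conjTranspose] at h2
  simp only [conjTranspose_mul, xh, hqi, hq] at h2
  rw [← Matrix.mul_assoc] at h2
  have : ∀ A B : Matrix n n ℂ, dual (VV K w q) (A - B) = dual (VV K w q) A - dual (VV K w q) B := by
    intro A B
    simp only [dual, Matrix.mul_sub, Matrix.sub_mul, Finset.sum_sub_distrib]
  rw [this, h1, h2]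

lemma fix_inter (hK : ∑ k, (K k)ᴴ * K k = 1) (hw : wᴴ = w) (hq : qᴴ = q)
    (hω : ∀ k, w * chan K (q * q) * w * K k = K k)
    (hi : q * qi = 1) {x : Matrix n n ℂ} (hx : dual (VV K w q) x = x) :
    ∃ y : Matrix o o ℂ, ∀ k, x * (K k)ᴴ = (K k)ᴴ * y := by
  refine ⟨∑ l, w * K l * q * x * q * (K l)ᴴ * w, fun k => ?_⟩
  have h := congrArg conjTranspose (hω k)
  simp only [conjTranspose_mul, chan_conjTranspose, hw, hq] at h
  conv_lhs => rw [← h, chan]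
  simp only [Matrix.mul_sum, Matrix.sum_mul]
  refine Finset.sum_congr rfl fun l _ => ?_
  have h := fix_comm' hK hw hq hω hi hx k l
  have h2 := congrArg (fun Z => Z * (q * (K l)ᴴ * w)) h
  simp only [Matrix.mul_assoc] at h2 ⊢
  exact h2

end

/-- Kraus operators of the first and second marginal channels. -/
def mK1 (L : κ → Matrix (o × o') n ℂ) : κ × o' → Matrix o n ℂ :=
  fun x => Matrix.of fun i a => L x.1 (i, x.2) a
def mK2 (L : κ → Matrix (o × o') n ℂ) : κ × o → Matrix o' n ℂ :=
  fun x => Matrix.of fun j a => L x.1 (x.2, j) a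

lemma mK1_inter (L : κ → Matrix (o × o') n ℂ) {x : Matrix n n ℂ} {y : Matrix o o ℂ}
    (h : ∀ k, x * (mK1 L k)ᴴ = (mK1 L k)ᴴ * y) (k : κ) :
    x * (L k)ᴴ = (L k)ᴴ * (y ⊗ₖ (1 : Matrix o' o' ℂ)) := by
  ext a ⟨i, j⟩
  have := congrFun (congrFun (h (k, j)) a) i
  simpa [mK1, Matrix.mul_apply, Fintype.sum_prod_type, kroneckerMap_apply, one_apply] using this

lemma mK2_inter (L : κ → Matrix (o × o') n ℂ) {x : Matrix n n ℂ} {y : Matrix o' o' ℂ}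
    (h : ∀ k, x * (mK2 L k)ᴴ = (mK2 L k)ᴴ * y) (k : κ) :
    x * (L k)ᴴ = (L k)ᴴ * ((1 : Matrix o o ℂ) ⊗ₖ y) := by
  ext a ⟨i, j⟩
  have := congrFun (congrFun (h (k, i)) a) j
  simp only [mK2, Matrix.mul_apply, Fintype.sum_prod_type, kroneckerMap_apply, one_apply,
    conjTranspose_apply, of_apply] at this ⊢
  rw [this, Finset.sum_eq_single i]
  · simp
  · intro b _ hb; simp [hb]
  · simp

lemma mK1_sum (L : κ → Matrix (o × o') n ℂ) (hL : ∑ k, (L k)ᴴ * L k = 1) :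
    ∑ k, (mK1 L k)ᴴ * mK1 L k = 1 := by
  rw [← hL]
  ext a b
  simp only [Matrix.sum_apply, Fintype.sum_prod_type, Matrix.mul_apply, mK1, conjTranspose_apply,
    of_apply]
  exact Finset.sum_congr rfl fun k _ => Finset.sum_comm

lemma mK2_sum (L : κ → Matrix (o × o') n ℂ) (hL : ∑ k, (L k)ᴴ * L k = 1) :
    ∑ k, (mK2 L k)ᴴ * mK2 L k = 1 := by
  rw [← hL]
  ext a b
  simp only [Matrix.sum_apply, Fintype.sum_prod_type, Matrix.mul_apply, mK2, conjTranspose_apply,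
    of_apply]

lemma inter_comm (L : κ → Matrix (o × o') n ℂ) (hL : ∑ k, (L k)ᴴ * L k = 1)
    {x x' : Matrix n n ℂ} {y : Matrix o o ℂ} {y' : Matrix o' o' ℂ}
    (h : ∀ k, x * (mK1 L k)ᴴ = (mK1 L k)ᴴ * y) (h' : ∀ k, x' * (mK2 L k)ᴴ = (mK2 L k)ᴴ * y') :
    x * x' = x' * x := by
  have key : ∀ k, x * x' * (L k)ᴴ = x' * x * (L k)ᴴ := by
    intro k
    rw [Matrix.mul_assoc, mK2_inter L h' k, ← Matrix.mul_assoc, mK1_inter L h k, Matrix.mul_assoc,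
      Matrix.mul_assoc x', mK1_inter L h k, ← Matrix.mul_assoc x', mK2_inter L h' k, Matrix.mul_assoc,
      ← mul_kronecker_mul, ← mul_kronecker_mul]
    simp
  calc x * x' = ∑ k, x * x' * (L k)ᴴ * L k := by
        simp only [Matrix.mul_assoc, ← Finset.mul_sum, hL, Matrix.mul_one]
    _ = ∑ k, x' * x * (L k)ᴴ * L k := by simp only [key]
    _ = x' * x := by
        simp only [Matrix.mul_assoc, ← Finset.mul_sum, hL, Matrix.mul_one]

/-- The commutation theorem in the faithful case. -/
theorem comm_core (L : κ → Matrix (o × o') n ℂ) (hL : ∑ k, (L k)ᴴ * L k = 1)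
    {s si q qi : Matrix n n ℂ} (hs : sᴴ = s) (hsi : s * si = 1) (hsi' : si * s = 1) (hq : s * s = q)
    (hqi : si * si = qi)
    {w1 : Matrix o o ℂ} {w2 : Matrix o' o' ℂ} (hw1 : w1ᴴ = w1) (hw2 : w2ᴴ = w2)
    (hω1 : ∀ k, w1 * chan (mK1 L) (q * q) * w1 * mK1 L k = mK1 L k)
    (hω2 : ∀ k, w2 * chan (mK2 L) (q * q) * w2 * mK2 L k = mK2 L k)
    {h : Matrix n n ℂ} (hh : hᴴ = h)
    (f1 : q * dual (mK1 L) (w1 * chan (mK1 L) h * w1) * q = h)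
    (f2 : q * dual (mK2 L) (w2 * chan (mK2 L) h * w2) * q = h) :
    ∃ x : Matrix n n ℂ, h = q * x * q ∧ x * (q * q) = q * q * x ∧
      (∃ y, ∀ k, x * (mK1 L k)ᴴ = (mK1 L k)ᴴ * y) ∧
      (∃ y, ∀ k, x * (mK2 L k)ᴴ = (mK2 L k)ᴴ * y) := by
  have hqh : qᴴ = q := by rw [← hq, conjTranspose_mul, hs]
  have hi : q * qi = 1 := by
    rw [← hq, ← hqi, Matrix.mul_assoc, ← Matrix.mul_assoc s si, hsi, Matrix.one_mul, hsi]
  have hi' : qi * q = 1 := by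
    rw [← hq, ← hqi, Matrix.mul_assoc, ← Matrix.mul_assoc si s, hsi', Matrix.one_mul, hsi']
  have hqih : qiᴴ = qi := by
    have : qiᴴ * q = 1 := by rw [← hqh, ← conjTranspose_mul, hi, conjTranspose_one]
    calc qiᴴ = qiᴴ * (q * qi) := by rw [hi, Matrix.mul_one]
      _ = qi := by rw [← Matrix.mul_assoc, this, Matrix.one_mul]
  have exq : ∀ {g : Matrix n n ℂ}, q * (qi * g * qi) * q = g := fun {g} => by
    calc q * (qi * g * qi) * q = (q * qi) * g * (qi * q) := by simp only [Matrix.mul_assoc]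
      _ = g := by rw [hi, hi', Matrix.one_mul, Matrix.mul_one]
  have qex : ∀ {g : Matrix n n ℂ}, qi * (q * g * q) * qi = g := fun {g} => by
    calc qi * (q * g * q) * qi = (qi * q) * g * (q * qi) := by simp only [Matrix.mul_assoc]
      _ = g := by rw [hi, hi', Matrix.one_mul, Matrix.mul_one]
  have K1 := mK1_sum L hL
  have K2 := mK2_sum L hL
  have x1 : dual (VV (mK1 L) w1 q) (qi * h * qi) = qi * h * qi := by
    rw [dual_VV _ _ _ hw1 hqh, exq]
    conv_rhs => rw [← f1, qex]
  have x2 : dual (VV (mK2 L) w2 q) (qi * h * qi) = qi * h * qi := by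
    rw [dual_VV _ _ _ hw2 hqh, exq]
    conv_rhs => rw [← f2, qex]
  have eh : h = q * (qi * h * qi) * q := exq.symm
  have xh : (qi * h * qi)ᴴ = qi * h * qi := by
    simp only [conjTranspose_mul, hqih, hh, Matrix.mul_assoc]
  set x := qi * h * qi with hx
  have G1 := fix_G K1 hw1 hqh hω1 hi hi' hqih xh x1
  set G := q * x * qi - qi * x * q with hG
  obtain ⟨y1, hy1⟩ := fix_inter K1 hw1 hqh hω1 hi x1
  obtain ⟨yG, hyG⟩ := fix_inter K1 hw1 hqh hω1 hi G1
  obtain ⟨y2, hy2⟩ := fix_inter K2 hw2 hqh hω2 hi x2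
  have cGx : G * x = x * G := inter_comm L hL hyG hy2
  have Gh : Gᴴ = -G := by
    simp only [hG, conjTranspose_sub, conjTranspose_mul, hqih, hqh, xh, neg_sub, Matrix.mul_assoc]
  have qGq : q * G * q = q * q * x - x * (q * q) := by
    calc q * G * q = q * q * x * (qi * q) - (q * qi) * x * q * q := by
          simp only [hG, Matrix.mul_sub, Matrix.sub_mul, Matrix.mul_assoc]
      _ = _ := by rw [hi, hi', Matrix.one_mul, Matrix.mul_one, Matrix.mul_assoc x]
  have tr0 : (q * G * q * G).trace = 0 := by
    rw [qGq, Matrix.sub_mul, trace_sub]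
    rw [Matrix.mul_assoc x, Matrix.trace_mul_comm x, Matrix.mul_assoc (q * q) G, cGx,
      Matrix.mul_assoc, sub_self]
  have G0 : G = 0 := by
    have h1 : ((s * G * s) * (s * G * s)ᴴ).trace = 0 := by
      have h2 : (s * G * s) * (s * G * s)ᴴ = - ((s * G * q * G) * s) := by
        simp only [conjTranspose_mul, hs, Gh, ← hq, Matrix.mul_assoc, Matrix.mul_neg,
          Matrix.neg_mul]
      have h3 : s * (s * G * q * G) = q * G * q * G := by
        rw [← hq]; simp only [Matrix.mul_assoc]
      rw [h2, trace_neg, Matrix.trace_mul_comm, h3, tr0, neg_zero]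
    rw [trace_mul_conjTranspose_self_eq_zero_iff] at h1
    calc G = (si * s) * G * (s * si) := by rw [hsi, hsi', Matrix.one_mul, Matrix.mul_one]
      _ = si * (s * G * s) * si := by simp only [Matrix.mul_assoc]
      _ = 0 := by rw [h1, Matrix.mul_zero, Matrix.zero_mul]
  have cq : x * (q * q) = q * q * x := by
    rw [G0, Matrix.mul_zero, Matrix.zero_mul] at qGq
    exact (sub_eq_zero.mp qGq.symm).symm
  exact ⟨x, eh, cq, ⟨y1, hy1⟩, ⟨y2, hy2⟩⟩

theorem comm_faithful (L : κ → Matrix (o × o') n ℂ) (hL : ∑ k, (L k)ᴴ * L k = 1)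
    {s si q qi : Matrix n n ℂ} (hs : sᴴ = s) (hsi : s * si = 1) (hsi' : si * s = 1) (hq : s * s = q)
    (hqi : si * si = qi)
    {w1 : Matrix o o ℂ} {w2 : Matrix o' o' ℂ} (hw1 : w1ᴴ = w1) (hw2 : w2ᴴ = w2)
    (hω1 : ∀ k, w1 * chan (mK1 L) (q * q) * w1 * mK1 L k = mK1 L k)
    (hω2 : ∀ k, w2 * chan (mK2 L) (q * q) * w2 * mK2 L k = mK2 L k)
    {h h' : Matrix n n ℂ} (hh : hᴴ = h) (hh' : h'ᴴ = h')
    (f1 : q * dual (mK1 L) (w1 * chan (mK1 L) h * w1) * q = h)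
    (f2 : q * dual (mK2 L) (w2 * chan (mK2 L) h * w2) * q = h)
    (f1' : q * dual (mK1 L) (w1 * chan (mK1 L) h' * w1) * q = h')
    (f2' : q * dual (mK2 L) (w2 * chan (mK2 L) h' * w2) * q = h') :
    h * h' = h' * h := by
  obtain ⟨x, eh, cq, ⟨y1, hy1⟩, -⟩ := comm_core L hL hs hsi hsi' hq hqi hw1 hw2 hω1 hω2 hh f1 f2
  obtain ⟨x', eh', cq', -, ⟨y2, hy2⟩⟩ :=
    comm_core L hL hs hsi hsi' hq hqi hw1 hw2 hω1 hω2 hh' f1' f2'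
  have cxx : x * x' = x' * x := inter_comm L hL hy1 hy2
  rw [eh, eh']
  calc q * x * q * (q * x' * q) = q * (x * (q * q)) * x' * q := by simp only [Matrix.mul_assoc]
    _ = q * (q * q) * (x * x') * q := by rw [cq]; simp only [Matrix.mul_assoc]
    _ = q * (q * q) * (x' * x) * q := by rw [cxx]
    _ = q * (q * q * x') * x * q := by simp only [Matrix.mul_assoc]
    _ = _ := by rw [← cq']; simp only [Matrix.mul_assoc]

end G
end NLB

namespace NLB
set_option linter.unusedSectionVars false
set_option linter.unusedSimpArgs false
section H
variable {κ ι m o o' β : Type*} [Fintype κ] [Fintype ι] [Fintype m] [Fintype o] [DecidableEq m] [DecidableEq o]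
  [Fintype o'] [DecidableEq o'] [Fintype β] [DecidableEq β]

/-- Reduction of the recovery data to the support. -/
lemma reduce_support {n : Type*} [Fintype n] [DecidableEq n] (K : κ → Matrix o m ℂ)
    {q : Matrix m m ℂ} {v : Matrix m n ℂ} {q' qi' : Matrix n n ℂ}
    (hv : vᴴ * v = 1) (hq : q = v * q' * vᴴ) (hi : q' * qi' = 1)
    {w : Matrix o o ℂ} 
    (hω : ∀ k, w * chan K (q * q) * w * K k * q = K k * q) :
    (∀ k, w * chan (fun k => K k * v) (q' * q') * w * (K k * v) = K k * v) ∧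
    ∀ h, q * dual K (w * chan K h * w) * q = h →
      h = v * (vᴴ * h * v) * vᴴ ∧
      q' * dual (fun k => K k * v) (w * chan (fun k => K k * v) (vᴴ * h * v) * w) * q'
        = vᴴ * h * v := by
  have cc : ∀ g, chan (fun k => K k * v) g = chan K (v * g * vᴴ) := by
    intro g
    simp only [chan, conjTranspose_mul, Matrix.mul_assoc]
  have dd : ∀ g, dual (fun k => K k * v) g = vᴴ * dual K g * v := by
    intro g
    simp only [dual, conjTranspose_mul, Matrix.mul_assoc, Matrix.mul_sum, Matrix.sum_mul]
  have qq : q * q = v * (q' * q') * vᴴ := by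
    calc q * q = v * q' * (vᴴ * v) * q' * vᴴ := by rw [hq]; simp only [Matrix.mul_assoc]
      _ = _ := by rw [hv, Matrix.mul_one]; simp only [Matrix.mul_assoc]
  have qv : q * v = v * q' := by
    rw [hq, Matrix.mul_assoc, hv, Matrix.mul_one]
  have vq : vᴴ * q = q' * vᴴ := by
    rw [hq, ← Matrix.mul_assoc, ← Matrix.mul_assoc, hv, Matrix.one_mul]
  refine ⟨fun k => ?_, fun h hh => ?_⟩
  · rw [cc, ← qq]
    have h1 := congrArg (fun Z => Z * (v * qi')) (hω k)
    have h2 : q * (v * qi') = v := by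
      rw [← Matrix.mul_assoc, qv, Matrix.mul_assoc, hi, Matrix.mul_one]
    simp only [Matrix.mul_assoc] at h1 ⊢
    rwa [h2] at h1
  · have e1 : h = v * (vᴴ * h * v) * vᴴ := by
      conv_lhs => rw [← hh]
      conv_rhs => rw [← hh]
      set D := dual K (w * chan K h * w)
      calc q * D * q = v * q' * vᴴ * D * (v * q' * vᴴ) := by rw [← hq]
        _ = v * (vᴴ * v) * q' * vᴴ * D * (v * q' * (vᴴ * v) * vᴴ) := by
          rw [hv, Matrix.mul_one, Matrix.mul_one]
        _ = v * (vᴴ * (v * q' * vᴴ * D * (v * q' * vᴴ)) * v) * vᴴ := by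
          simp only [Matrix.mul_assoc]
        _ = _ := by rw [← hq]
    refine ⟨e1, ?_⟩
    rw [cc, dd, ← e1]
    conv_rhs => rw [← hh]
    calc _ = (q' * vᴴ) * dual K (w * chan K h * w) * (v * q') := by simp only [Matrix.mul_assoc]
      _ = _ := by rw [← vq, ← qv]; simp only [Matrix.mul_assoc]

lemma slc_herm {ρ : Matrix (m × β) (m × β) ℂ} (hρ : ρᴴ = ρ) {M : Matrix β β ℂ} (hM : Mᴴ = M) :
    (slc ρ M)ᴴ = slc ρ M := by
  have : ∀ X : Matrix (m × β) (m × β) ℂ, (ptraceRight X)ᴴ = ptraceRight Xᴴ := by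
    intro X; ext i j; simp [ptraceRight]
  unfold slc
  rw [this, conjTranspose_mul, conjTranspose_kronecker, hM, hρ, conjTranspose_one, ptR_cyc]

/-- One-sided theorem: if both marginal channels preserve the mutual information, the
slices commute. -/
theorem slices_comm (L : κ → Matrix (o × o') m ℂ) (hL : ∑ k, (L k)ᴴ * L k = 1)
    {ρ : Matrix (m × β) (m × β) ℂ} (hρ : ρ.PosSemidef)
    (h1 : mutualInfo (chan (lft β (mK1 L)) ρ) = mutualInfo ρ)
    (h2 : mutualInfo (chan (lft β (mK2 L)) ρ) = mutualInfo ρ)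
    {M M' : Matrix β β ℂ} (hM : Mᴴ = M) (hM' : M'ᴴ = M') :
    slc ρ M * slc ρ M' = slc ρ M' * slc ρ M := by
  classical
  obtain ⟨W, a, sA, ha, eA⟩ := exists_spec (ptR_psd hρ)
  obtain ⟨w1, hw1, b1, c1⟩ := (mi_dpi (mK1 L) (mK1_sum L hL) hρ sA ha eA).2 h1
  obtain ⟨w2, hw2, b2, c2⟩ := (mi_dpi (mK2 L) (mK2_sum L hL) hρ sA ha eA).2 h2
  have qq : fspec W (fun i => √(a i)) * fspec W (fun i => √(a i)) = ptraceRight ρ := by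
    rw [fspec_mul sA.1]
    conv_rhs => rw [← fspec_self sA]
    congr 1; ext i; exact Real.mul_self_sqrt (ha i)
  rw [← qq] at b1 b2
  set q := fspec W (fun i => √(a i)) with hq
  let n := {i : m // a i ≠ 0}
  let v : Matrix m n ℂ := W.submatrix id Subtype.val
  let q' : Matrix n n ℂ := diagonal fun i => ((√(a i) : ℝ) : ℂ)
  let qi' : Matrix n n ℂ := diagonal fun i => ((√(a i) : ℝ) : ℂ)⁻¹
  let s : Matrix n n ℂ := diagonal fun i => ((√(√(a i)) : ℝ) : ℂ)
  let si : Matrix n n ℂ := diagonal fun i => ((√(√(a i)) : ℝ) : ℂ)⁻¹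
  have pos : ∀ i : n, 0 < a i := fun i => lt_of_le_of_ne (ha i) (Ne.symm i.2)
  have hv : vᴴ * v = 1 := by
    ext i j
    have := congrFun (congrFun sA.1 i) j
    rw [Matrix.mul_apply] at this ⊢
    simp only [one_apply] at this ⊢
    have hij : (i = j) ↔ (i : m) = (j : m) := Subtype.ext_iff
    simp only [hij]
    simpa [v] using this
  have hqv : q = v * q' * vᴴ := by
    ext i j
    rw [hq, fspec, Matrix.mul_apply, Matrix.mul_apply]
    simp only [mul_diagonal, conjTranspose_apply, v, q', submatrix_apply, id]
    rw [← Fintype.sum_subtype_add_sum_subtype (fun i => a i ≠ 0)]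
    have z : ∑ k : {i : m // ¬ a i ≠ 0}, W i k * ((√(a k) : ℝ) : ℂ) * star (W j k) = 0 := by
      apply Finset.sum_eq_zero
      intro k _
      have := not_not.mp k.2
      simp [this]
    rw [z, add_zero]
  have hqq : q' * qi' = 1 := by
    simp only [q', qi', diagonal_mul_diagonal]
    rw [← diagonal_one]; congr 1; ext i
    exact mul_inv_cancel₀ (by exact_mod_cast (Real.sqrt_pos.mpr (pos i)).ne')
  have hss : s * si = 1 := by
    simp only [s, si, diagonal_mul_diagonal]
    rw [← diagonal_one]; congr 1; ext i
    exact mul_inv_cancel₀ (by exact_mod_cast (Real.sqrt_pos.mpr (Real.sqrt_pos.mpr (pos i))).ne')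
  have hss' : si * s = 1 := by
    simp only [s, si, diagonal_mul_diagonal]
    rw [← diagonal_one]; congr 1; ext i
    exact inv_mul_cancel₀ (by exact_mod_cast (Real.sqrt_pos.mpr (Real.sqrt_pos.mpr (pos i))).ne')
  have hs : s * s = q' := by
    simp only [s, q', diagonal_mul_diagonal]
    congr 1; ext i
    rw [← Complex.ofReal_mul, Real.mul_self_sqrt (Real.sqrt_nonneg _)]
  have hsh : sᴴ = s := by
    simp only [s, diagonal_conjTranspose]
    congr 1; ext i; simp
  obtain ⟨r1, r1'⟩ := reduce_support (mK1 L) hv hqv hqq b1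
  obtain ⟨r2, r2'⟩ := reduce_support (mK2 L) hv hqv hqq b2
  have k1 : (fun k => mK1 L k * v) = mK1 (fun k => L k * v) := by
    ext k i j; simp [mK1, Matrix.mul_apply]
  have k2 : (fun k => mK2 L k * v) = mK2 (fun k => L k * v) := by
    ext k i j; simp [mK2, Matrix.mul_apply]
  have k1' : ∀ k, mK1 L k * v = mK1 (fun k => L k * v) k := fun k => congrFun k1 k
  have k2' : ∀ k, mK2 L k * v = mK2 (fun k => L k * v) k := fun k => congrFun k2 k
  have hL' : ∑ k, (L k * v)ᴴ * (L k * v) = 1 := by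
    calc ∑ k, (L k * v)ᴴ * (L k * v) = vᴴ * (∑ k, (L k)ᴴ * L k) * v := by
          simp only [conjTranspose_mul, Matrix.mul_sum, Matrix.sum_mul, Matrix.mul_assoc]
      _ = 1 := by rw [hL, Matrix.mul_one, hv]
  have hherm : ∀ {X : Matrix m m ℂ}, Xᴴ = X → (vᴴ * X * v)ᴴ = vᴴ * X * v := by
    intro X hX
    simp only [conjTranspose_mul, conjTranspose_conjTranspose, hX, Matrix.mul_assoc]
  rw [k1] at r1 r1'
  rw [k2] at r2 r2'
  simp only [k1'] at r1
  simp only [k2'] at r2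
  have key := comm_faithful (fun k => L k * v) hL' hsh hss hss' hs rfl hw1 hw2 r1 r2
    (hherm (slc_herm hρ.isHermitian hM)) (hherm (slc_herm hρ.isHermitian hM'))
    (r1' _ (c1 M)).2 (r2' _ (c2 M)).2 (r1' _ (c1 M')).2 (r2' _ (c2 M')).2
  rw [(r1' _ (c1 M)).1, (r1' _ (c1 M')).1]
  set A := vᴴ * slc ρ M * v
  set B := vᴴ * slc ρ M' * v
  calc v * A * vᴴ * (v * B * vᴴ) = v * A * (vᴴ * v) * B * vᴴ := by simp only [Matrix.mul_assoc]
    _ = v * (A * B) * vᴴ := by rw [hv, Matrix.mul_one]; simp only [Matrix.mul_assoc]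
    _ = v * B * (vᴴ * v) * A * vᴴ := by
      rw [key, hv, Matrix.mul_one]; simp only [Matrix.mul_assoc]
    _ = _ := by simp only [Matrix.mul_assoc]

end H
end NLB

namespace NLB
set_option linter.unusedSectionVars false
set_option linter.unusedSimpArgs false
section I
variable {κ κ' m n o o' β β₁ β₂ : Type*} [Fintype κ] [Fintype κ'] [Fintype m] [Fintype n] [Fintype o]
  [Fintype o'] [DecidableEq m]
  [DecidableEq n] [DecidableEq o] [DecidableEq o'] [Fintype β] [DecidableEq β]
  [Fintype β₁] [DecidableEq β₁] [Fintype β₂] [DecidableEq β₂]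

lemma exists_kraus (Λ : Matrix m m ℂ →ₗ[ℂ] Matrix o o ℂ) (h : IsQuantumChannel Λ) :
    ∃ K : (Fin (Fintype.card m) × o) → Matrix o m ℂ, (∀ X, Λ X = chan K X) ∧
      ∑ k, (K k)ᴴ * K k = 1 := by
  obtain ⟨hcp, htp⟩ := h
  let e := Fintype.equivFin m
  let v : Fin (Fintype.card m) × m → ℂ := fun x => if x.1 = e x.2 then 1 else 0
  have hΩ : (vecMulVec v (star v)).PosSemidef := posSemidef_vecMulVec_self_star v
  obtain ⟨B, hB⟩ := psd_factor (hcp _ _ hΩ)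
  have hE : ∀ a a' s t, Λ (single a a' 1) s t = ∑ z, star (B z (e a, s)) * B z (e a', t) := by
    intro a a' s t
    have h1 := congrFun (congrFun hB (e a, s)) (e a', t)
    simp only [Matrix.mul_apply, conjTranspose_apply] at h1
    rw [← h1]
    simp only [idTensor, LinearMap.coe_mk, AddHom.coe_mk, of_apply]
    refine congrFun (congrFun (congrArg Λ ?_) _) _
    ext b b'
    simp only [v, vecMulVec_apply, Pi.star_apply, of_apply, single_apply,
      EmbeddingLike.apply_eq_iff_eq]
    by_cases h1 : a = b <;> by_cases h2 : a' = b' <;> simp [h1, h2]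
  let K : (Fin (Fintype.card m) × o) → Matrix o m ℂ := fun z => of fun s a => star (B z (e a, s))
  have hK : ∀ X, Λ X = chan K X := by
    intro X
    ext s t
    conv_lhs => rw [matrix_eq_sum_single X]
    simp only [map_sum, Matrix.sum_apply, chan, Matrix.mul_apply, conjTranspose_apply, K, of_apply,
      star_star, Finset.sum_mul]
    have : ∀ a a', Λ (single a a' (X a a')) s t
        = ∑ z, star (B z (e a, s)) * X a a' * B z (e a', t) := by
      intro a a'
      have h2 : single a a' (X a a') = X a a' • single a a' (1 : ℂ) := by simp [smul_single]
      rw [h2, map_smul, Matrix.smul_apply, hE, smul_eq_mul, Finset.mul_sum]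
      exact Finset.sum_congr rfl fun _ _ => by ring
    simp only [this]
    rw [Finset.sum_comm]
    simp only [Finset.sum_comm (s := (Finset.univ : Finset m))
      (t := (Finset.univ : Finset (Fin (Fintype.card m) × o)))]
  refine ⟨K, hK, ?_⟩
  have hd : ∀ X, (X * dual K 1).trace = X.trace := by
    intro X
    rw [← trace_chan, Matrix.mul_one, ← hK, htp]
  have hd1 : dual K 1 = 1 := by
    ext a b
    have h3 := hd (single b a 1)
    have h4 : (single b a (1 : ℂ) * dual K 1).trace = dual K 1 a b := by
      simp [Matrix.trace, Matrix.mul_apply, single_apply, ite_and]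
    rw [← h4, h3]
    by_cases hab : a = b
    · subst hab
      simp [Matrix.trace_single_eq_same]
    · rw [Matrix.trace_single_eq_of_ne _ _ _ (Ne.symm hab), one_apply_ne hab]
  simpa [dual] using hd1

lemma chan_lft_apply (K : κ → Matrix o m ℂ) (M : Matrix (m × β) (m × β) ℂ) (p q : o × β) :
    chan (lft β K) M p q = chan K (of fun a a' => M (a, p.2) (a', q.2)) p.1 q.1 := by
  simp only [chan, lft, Matrix.sum_apply, Matrix.mul_apply,
    Fintype.sum_prod_type, kroneckerMap_apply, conjTranspose_apply, of_apply,
    one_apply, mul_ite, mul_one, mul_zero, ite_mul, zero_mul, Finset.sum_ite_eq, Finset.mem_univ,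
    if_true, Finset.sum_ite_eq', apply_ite star, star_zero, star_mul', star_one]

lemma chan_mK1 (L : κ → Matrix (o × o') m ℂ) (X : Matrix m m ℂ) :
    chan (mK1 L) X = ptraceRight (chan L X) := by
  ext i j
  simp only [chan, mK1, ptraceRight, Matrix.sum_apply, Matrix.mul_apply,
    Fintype.sum_prod_type, conjTranspose_apply, of_apply]
  rw [Finset.sum_comm]

lemma chan_mK2 (L : κ → Matrix (o × o') m ℂ) (X : Matrix m m ℂ) :
    chan (mK2 L) X = ptraceLeft (chan L X) := by
  ext i j
  simp only [chan, mK2, ptraceLeft, Matrix.sum_apply, Matrix.mul_apply,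
    Fintype.sum_prod_type, conjTranspose_apply, of_apply]
  rw [Finset.sum_comm]

lemma marg11_eq (Λ : Matrix m m ℂ →ₗ[ℂ] Matrix (o × o') (o × o') ℂ)
    (Γ : Matrix β β ℂ →ₗ[ℂ] Matrix (β₁ × β₂) (β₁ × β₂) ℂ)
    (L : κ → Matrix (o × o') m ℂ) (G : κ' → Matrix (β₁ × β₂) β ℂ)
    (hL : ∀ X, Λ X = chan L X) (hG : ∀ X, Γ X = chan G X) (ρ : Matrix (m × β) (m × β) ℂ) :
    marg11 (idTensor Γ (tensorId Λ ρ))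
      = swp (chan (lft o (mK1 G)) (swp (chan (lft β (mK1 L)) ρ))) := by
  ext p q
  simp only [swp, submatrix_apply, chan_lft_apply, chan_mK1, Prod.fst_swap, Prod.snd_swap,
    ← hL, ← hG, Prod.swap_prod_mk]
  simp only [marg11, idTensor, tensorId, LinearMap.coe_mk, AddHom.coe_mk, of_apply, ptraceRight]
  rw [Finset.sum_comm]
  refine Finset.sum_congr rfl fun b₂ _ => ?_
  rw [← Matrix.sum_apply, ← map_sum]
  refine congrFun (congrFun (congrArg Γ ?_) _) _
  ext b b'
  simp [Matrix.sum_apply]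

lemma marg22_eq (Λ : Matrix m m ℂ →ₗ[ℂ] Matrix (o × o') (o × o') ℂ)
    (Γ : Matrix β β ℂ →ₗ[ℂ] Matrix (β₁ × β₂) (β₁ × β₂) ℂ)
    (L : κ → Matrix (o × o') m ℂ) (G : κ' → Matrix (β₁ × β₂) β ℂ)
    (hL : ∀ X, Λ X = chan L X) (hG : ∀ X, Γ X = chan G X) (ρ : Matrix (m × β) (m × β) ℂ) :
    marg22 (idTensor Γ (tensorId Λ ρ))
      = swp (chan (lft o' (mK2 G)) (swp (chan (lft β (mK2 L)) ρ))) := by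
  ext p q
  simp only [swp, submatrix_apply, chan_lft_apply, chan_mK2, Prod.fst_swap, Prod.snd_swap,
    ← hL, ← hG, Prod.swap_prod_mk]
  simp only [marg22, idTensor, tensorId, LinearMap.coe_mk, AddHom.coe_mk, of_apply, ptraceLeft]
  rw [Finset.sum_comm]
  refine Finset.sum_congr rfl fun b₂ _ => ?_
  rw [← Matrix.sum_apply, ← map_sum]
  refine congrFun (congrFun (congrArg Γ ?_) _) _
  ext b b'
  simp [Matrix.sum_apply]

lemma swp_chan (G : κ' → Matrix o' β ℂ) (τ : Matrix (n × β) (n × β) ℂ) :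
    swp (chan (lft n G) (swp τ))
      = ∑ k, ((1 : Matrix n n ℂ) ⊗ₖ G k) * τ * ((1 : Matrix n n ℂ) ⊗ₖ (G k)ᴴ) := by
  ext p q
  simp only [swp, submatrix_apply, chan_lft_apply]
  simp only [chan, Matrix.sum_apply, Matrix.mul_apply,
  Fintype.sum_prod_type, kroneckerMap_apply, conjTranspose_apply, of_apply,
  one_apply, mul_ite, mul_one, mul_zero, ite_mul, zero_mul, one_mul, Finset.sum_ite_eq, Finset.mem_univ,
  if_true, Finset.sum_ite_eq', apply_ite star, star_zero, star_mul', star_one, submatrix_apply,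
  Prod.swap, Finset.sum_ite_irrel, Finset.sum_const_zero]

lemma swp_comm (K : κ → Matrix o m ℂ) (G : κ' → Matrix o' β ℂ) (ρ : Matrix (m × β) (m × β) ℂ) :
    swp (chan (lft o G) (swp (chan (lft β K) ρ)))
      = chan (lft o' K) (swp (chan (lft m G) (swp ρ))) := by
  have h : ∀ (ρ : Matrix (m × β) (m × β) ℂ), chan (lft β K) ρ
      = ∑ k, (K k ⊗ₖ (1 : Matrix β β ℂ)) * ρ * ((K k)ᴴ ⊗ₖ (1 : Matrix β β ℂ)) := by
    intro ρ; simp [chan, lft, conjTranspose_kronecker]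
  rw [swp_chan, swp_chan, h]
  simp only [chan, lft, conjTranspose_kronecker, conjTranspose_one, Matrix.mul_sum, Matrix.sum_mul]
  rw [Finset.sum_comm]
  refine Finset.sum_congr rfl fun _ _ => Finset.sum_congr rfl fun _ _ => ?_
  simp only [Matrix.mul_assoc, ← mul_kronecker_mul, Matrix.mul_one, Matrix.one_mul]
  simp only [← Matrix.mul_assoc, ← mul_kronecker_mul, Matrix.mul_one, Matrix.one_mul]

lemma mi_le (K : κ → Matrix o m ℂ) (hK : ∑ k, (K k)ᴴ * K k = 1)
    {ρ : Matrix (m × β) (m × β) ℂ} (hρ : ρ.PosSemidef) :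
    mutualInfo (chan (lft β K) ρ) ≤ mutualInfo ρ := by
  obtain ⟨W, a, s, ha, e⟩ := exists_spec (ptR_psd hρ)
  exact (mi_dpi K hK hρ s ha e).1

lemma mi_eq_left (K : κ → Matrix o m ℂ) (hK : ∑ k, (K k)ᴴ * K k = 1)
    (G : κ' → Matrix o' β ℂ) (hG : ∑ k, (G k)ᴴ * G k = 1)
    {ρ : Matrix (m × β) (m × β) ℂ} (hρ : ρ.PosSemidef)
    (h : mutualInfo (swp (chan (lft o G) (swp (chan (lft β K) ρ)))) = mutualInfo ρ) :
    mutualInfo (chan (lft β K) ρ) = mutualInfo ρ := by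
  refine le_antisymm (mi_le K hK hρ) ?_
  have h1 := chan_psd (lft β K) hρ
  rw [← h, mutualInfo_swp (chan_psd _ (swp_psd h1)), ← mutualInfo_swp h1]
  exact mi_le G hG (swp_psd h1)

lemma mi_eq_right (K : κ → Matrix o m ℂ) (hK : ∑ k, (K k)ᴴ * K k = 1)
    (G : κ' → Matrix o' β ℂ) (hG : ∑ k, (G k)ᴴ * G k = 1)
    {ρ : Matrix (m × β) (m × β) ℂ} (hρ : ρ.PosSemidef)
    (h : mutualInfo (swp (chan (lft o G) (swp (chan (lft β K) ρ)))) = mutualInfo ρ) :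
    mutualInfo (chan (lft m G) (swp ρ)) = mutualInfo (swp ρ) := by
  have hs := swp_psd hρ
  refine le_antisymm (mi_le G hG hs) ?_
  have h1 := chan_psd (lft m G) hs
  rw [mutualInfo_swp hρ, ← h, swp_comm, ← mutualInfo_swp h1]
  exact mi_le K hK (swp_psd h1)

end I
end NLB

namespace NLB
set_option linter.unusedSectionVars false
set_option linter.unusedSimpArgs false
section J
variable {m β : Type*} [Fintype m] [DecidableEq m] [Fintype β] [DecidableEq β]

lemma simul_diag {ι : Type*} (A : ι → Matrix m m ℂ) (hA : ∀ i, (A i)ᴴ = A i)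
    (hc : ∀ i j, A i * A j = A j * A i) :
    ∃ v : m → m → ℂ, (∀ i i', star (v i) ⬝ᵥ v i' = if i = i' then 1 else 0) ∧
      ∀ j i, ∃ c : ℂ, A j *ᵥ v i = c • v i := by
  classical
  let T : ι → Module.End ℂ (EuclideanSpace ℂ m) := fun i => Matrix.toEuclideanLin (A i)
  have hT : ∀ i, (T i).IsSymmetric := fun i => isSymmetric_toEuclideanLin_iff.mpr (hA i)
  have hC : Pairwise (Function.onFun Commute T) := by
    intro i j _
    show T i * T j = T j * T i
    ext x
    simp [T, Matrix.mulVec_mulVec, hc i j]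
  have hI := LinearMap.IsSymmetric.directSum_isInternal_of_pairwise_commute hT hC
  have hO := LinearMap.IsSymmetric.orthogonalFamily_iInf_eigenspaces hT
  have hI2 := DirectSum.isInternal_ne_bot_iff.mpr hI
  have := hI.submodule_iSupIndep.fintypeNeBotOfFiniteDimensional
  have hO2 := hO.comp (γ := {γ : ι → ℂ // (⨅ j, Module.End.eigenspace (T j) (γ j)) ≠ ⊥})
    (f := Subtype.val) Subtype.val_injective
  have hn : Module.finrank ℂ (EuclideanSpace ℂ m) = Fintype.card m := finrank_euclideanSpace
  let b := (hI2.subordinateOrthonormalBasis hn hO2).reindex (Fintype.equivFin m).symm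
  refine ⟨fun i => (b i).ofLp, fun i i' => ?_, fun j i => ?_⟩
  · have := orthonormal_iff_ite.mp b.orthonormal i i'
    rw [EuclideanSpace.inner_eq_star_dotProduct, dotProduct_comm] at this
    exact this
  · have := hI2.subordinateOrthonormalBasis_subordinate hn (Fintype.equivFin m i) hO2
    rw [Submodule.mem_iInf] at this
    have h := Module.End.mem_eigenspace_iff.mp (this j)
    have h2 := congrArg WithLp.ofLp h
    simp only [T, ofLp_toEuclideanLin_apply, WithLp.ofLp_smul] at h2
    simp only [b, OrthonormalBasis.reindex_apply, Equiv.symm_symm]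
    exact ⟨_, h2⟩

lemma simul_unitary {ι : Type*} (A : ι → Matrix m m ℂ) (hA : ∀ i, (A i)ᴴ = A i)
    (hc : ∀ i j, A i * A j = A j * A i) :
    ∃ V : Matrix m m ℂ, Vᴴ * V = 1 ∧ V * Vᴴ = 1 ∧ ∀ j i i', i ≠ i' → (Vᴴ * A j * V) i i' = 0 := by
  obtain ⟨v, h1, h2⟩ := simul_diag A hA hc
  have hV : (of fun a i => v i a)ᴴ * (of fun a i => v i a) = 1 := by
    ext i i'
    rw [one_apply, ← h1]
    simp [Matrix.mul_apply, dotProduct]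
  refine ⟨of fun a i => v i a, hV, mul_eq_one_comm.mp hV, fun j i i' hne => ?_⟩
  obtain ⟨c, hc⟩ := h2 j i'
  have : ∀ k, (A j * (of fun a i => v i a)) k i' = c * v i' k := fun k => congrFun hc k
  rw [Matrix.mul_assoc, Matrix.mul_apply]
  simp only [this, conjTranspose_apply, of_apply]
  have h3 := h1 i i'
  rw [if_neg hne] at h3
  calc _ = c * (star (v i) ⬝ᵥ v i') := by
        rw [dotProduct, Finset.mul_sum]
        exact Finset.sum_congr rfl fun x _ => by simp [mul_left_comm]
    _ = 0 := by rw [h3, mul_zero]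

lemma slc_add (ρ : Matrix (m × β) (m × β) ℂ) (M N : Matrix β β ℂ) (c : ℂ) :
    slc ρ (M + c • N) = slc ρ M + c • slc ρ N := by
  unfold slc
  rw [kronecker_add, kronecker_smul, Matrix.mul_add, Matrix.mul_smul]
  ext i j
  simp [ptraceRight, Finset.sum_add_distrib, Finset.mul_sum]

lemma slc_apply (ρ : Matrix (m × β) (m × β) ℂ) (M : Matrix β β ℂ) (i i' : m) :
    slc ρ M i i' = ∑ j, ∑ k, ρ (i, j) (i', k) * M k j := by
  simp only [slc, ptraceRight, of_apply, Matrix.mul_apply, Fintype.sum_prod_type,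
    kroneckerMap_apply, one_apply, ite_mul, one_mul, zero_mul, mul_ite, mul_zero,
    Finset.sum_ite_irrel, Finset.sum_const_zero, Finset.sum_ite_eq', Finset.mem_univ, if_true]

/-- If the slices commute, they are simultaneously diagonalised, so conjugated entries vanish. -/
lemma exists_left {ρ : Matrix (m × β) (m × β) ℂ} (hρ : ρᴴ = ρ)
    (hc : ∀ M M' : Matrix β β ℂ, Mᴴ = M → M'ᴴ = M' → slc ρ M * slc ρ M' = slc ρ M' * slc ρ M) :
    ∃ V : Matrix m m ℂ, Vᴴ * V = 1 ∧ V * Vᴴ = 1 ∧ ∀ W : Matrix β β ℂ, ∀ i i' j j', i ≠ i' →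
      ((V ⊗ₖ W)ᴴ * ρ * (V ⊗ₖ W)) (i, j) (i', j') = 0 := by
  obtain ⟨V, h1, h2, h3⟩ := simul_unitary (ι := {M : Matrix β β ℂ // Mᴴ = M})
    (fun M => slc ρ M.1) (fun M => slc_herm hρ M.2) (fun M M' => hc _ _ M.2 M'.2)
  refine ⟨V, h1, h2, fun W i i' j j' hne => ?_⟩
  have hall : ∀ M : Matrix β β ℂ, (Vᴴ * slc ρ M * V) i i' = 0 := by
    intro M
    have e : M = ((1 / 2 : ℂ) • (M + Mᴴ)) + (-Complex.I) • ((Complex.I / 2) • (M - Mᴴ)) := by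
      ext a b
      simp only [Matrix.add_apply, Matrix.smul_apply, Matrix.sub_apply, smul_eq_mul]
      linear_combination ((1 / 2 : ℂ) * M a b - (1/2 : ℂ) * Mᴴ a b) * Complex.I_mul_I
    have H1 : ((1 / 2 : ℂ) • (M + Mᴴ))ᴴ = (1 / 2 : ℂ) • (M + Mᴴ) := by
      simp [conjTranspose_smul, add_comm]
    have H2 : ((Complex.I / 2) • (M - Mᴴ))ᴴ = (Complex.I / 2) • (M - Mᴴ) := by
      rw [conjTranspose_smul, conjTranspose_sub, conjTranspose_conjTranspose, ← neg_sub M, smul_neg,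
        ← neg_smul]
      congr 1
      simp [neg_div]
    rw [e, slc_add, Matrix.mul_add, Matrix.add_mul, Matrix.add_apply, h3 ⟨_, H1⟩ i i' hne,
      Matrix.mul_smul, Matrix.smul_mul, Matrix.smul_apply, h3 ⟨_, H2⟩ i i' hne]
    simp
  have e1 : (V ⊗ₖ W)ᴴ * ρ * (V ⊗ₖ W) = ((1 : Matrix m m ℂ) ⊗ₖ Wᴴ) * ((Vᴴ ⊗ₖ (1 : Matrix β β ℂ)) * ρ *
      (V ⊗ₖ (1 : Matrix β β ℂ))) * ((1 : Matrix m m ℂ) ⊗ₖ W) := by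
    simp only [Matrix.mul_assoc, ← mul_kronecker_mul, Matrix.mul_one, Matrix.one_mul]
    simp only [← Matrix.mul_assoc, ← mul_kronecker_mul, Matrix.mul_one, Matrix.one_mul,
      conjTranspose_kronecker]
  have e2 : ∀ k k', ((Vᴴ ⊗ₖ (1 : Matrix β β ℂ)) * ρ * (V ⊗ₖ (1 : Matrix β β ℂ))) (i, k) (i', k') = 0 := by
    intro k k'
    have := hall (single k' k 1)
    rw [← slc_sand, slc_apply] at this
    simpa [single_apply, ite_and] using this
  rw [e1]
  generalize (Vᴴ ⊗ₖ (1 : Matrix β β ℂ)) * ρ * (V ⊗ₖ (1 : Matrix β β ℂ)) = R at e2 ⊢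
  simp only [Matrix.mul_apply, Fintype.sum_prod_type,
    kroneckerMap_apply, one_apply, ite_mul, one_mul, zero_mul, mul_ite, mul_zero,
    Finset.sum_ite_irrel, Finset.sum_const_zero, Finset.sum_ite_eq', Finset.sum_ite_eq,
    Finset.mem_univ, if_true, e2]

theorem cc_of_comm {ρ : Matrix (m × β) (m × β) ℂ} (hρ : IsDensityMatrix ρ)
    (hc : ∀ M M' : Matrix β β ℂ, Mᴴ = M → M'ᴴ = M' → slc ρ M * slc ρ M' = slc ρ M' * slc ρ M)
    (hc' : ∀ M M' : Matrix m m ℂ, Mᴴ = M → M'ᴴ = M' →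
      slc (swp ρ) M * slc (swp ρ) M' = slc (swp ρ) M' * slc (swp ρ) M) :
    ClassicalClassical ρ := by
  obtain ⟨hpsd, htr⟩ := hρ
  obtain ⟨V, v1, v2, hV⟩ := exists_left hpsd.1 hc
  obtain ⟨W, w1, w2, hW⟩ := exists_left (swp_psd hpsd).1 hc'
  set R := (V ⊗ₖ W)ᴴ * ρ * (V ⊗ₖ W) with hR
  have hRp : R.PosSemidef := hpsd.conjTranspose_mul_mul_same _
  have hd : R = diagonal fun x => ((R x x).re : ℂ) := by
    ext ⟨i, j⟩ ⟨i', j'⟩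
    rw [diagonal_apply]
    split_ifs with h
    · rw [h]
      have := hRp.1.apply (i', j') (i', j')
      exact (Complex.conj_eq_iff_re.mp this).symm
    · by_cases h1 : i = i'
      · have h2 : j ≠ j' := fun h2 => h (by rw [h1, h2])
        have h3 := hW V j j' i i' h2
        have h4 : (W ⊗ₖ V)ᴴ * swp ρ * (W ⊗ₖ V) = swp R := by
          rw [hR, swp_mul, swp_mul, conjTranspose_kronecker, conjTranspose_kronecker, swp_kron,
            swp_kron]
        rw [h4] at h3
        exact h3
      · exact hV W i i' j j' h1
  have hU : (V ⊗ₖ W) * (V ⊗ₖ W)ᴴ = 1 := by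
    rw [conjTranspose_kronecker, ← mul_kronecker_mul, v2, w2, one_kronecker_one]
  have hρR : ρ = (V ⊗ₖ W) * R * (V ⊗ₖ W)ᴴ := by
    rw [hR]
    calc ρ = ((V ⊗ₖ W) * (V ⊗ₖ W)ᴴ) * ρ * ((V ⊗ₖ W) * (V ⊗ₖ W)ᴴ) := by
          rw [hU, Matrix.one_mul, Matrix.mul_one]
      _ = _ := by simp only [Matrix.mul_assoc]
  refine ⟨fun i j => (R (i, j) (i, j)).re, fun i a => V a i, fun j b => W b j, fun i j => ?_, ?_,
    fun i i' => ?_, fun j j' => ?_, ?_⟩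
  · exact (Complex.nonneg_iff.mp (hRp.diag_nonneg (i := (i, j)))).1
  · have h : R.trace = 1 := by
      rw [hR, trace_mul_comm, ← Matrix.mul_assoc, hU, Matrix.one_mul, htr]
    have := congrArg Complex.re h
    simpa [Matrix.trace, Fintype.sum_prod_type] using this
  · have := congrFun (congrFun v1 i) i'
    rw [one_apply] at this
    rw [← this]
    simp [Matrix.mul_apply, dotProduct]
  · have := congrFun (congrFun w1 j) j'
    rw [one_apply] at this
    rw [← this]
    simp [Matrix.mul_apply, dotProduct]
  · rw [hd] at hρR
    conv_lhs => rw [hρR]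
    ext ⟨a, b⟩ ⟨a', b'⟩
    rw [Matrix.mul_apply]
    simp only [Matrix.mul_diagonal, Fintype.sum_prod_type, kroneckerMap_apply, conjTranspose_apply,
      Matrix.sum_apply, Matrix.smul_apply, vecMulVec_apply, Pi.star_apply, smul_eq_mul, star_mul']
    exact Finset.sum_congr rfl fun _ _ => Finset.sum_congr rfl fun _ _ => by ring

theorem forward {ρ : Matrix (m × β) (m × β) ℂ} (hρ : IsDensityMatrix ρ)
    (Λ : Matrix m m ℂ →ₗ[ℂ] Matrix (m × m) (m × m) ℂ)
    (Γ : Matrix β β ℂ →ₗ[ℂ] Matrix (β × β) (β × β) ℂ)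
    (hΛ : IsQuantumChannel Λ) (hΓ : IsQuantumChannel Γ)
    (h1 : mutualInfo (marg11 (idTensor Γ (tensorId Λ ρ))) = mutualInfo ρ)
    (h2 : mutualInfo (marg22 (idTensor Γ (tensorId Λ ρ))) = mutualInfo ρ) :
    ClassicalClassical ρ := by
  obtain ⟨L, hL, hL1⟩ := exists_kraus Λ hΛ
  obtain ⟨G, hG, hG1⟩ := exists_kraus Γ hΓ
  rw [marg11_eq Λ Γ L G hL hG] at h1
  rw [marg22_eq Λ Γ L G hL hG] at h2
  have a1 := mK1_sum L hL1
  have a2 := mK2_sum L hL1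
  have b1 := mK1_sum G hG1
  have b2 := mK2_sum G hG1
  refine cc_of_comm hρ (fun M M' hM hM' => ?_) (fun M M' hM hM' => ?_)
  · exact slices_comm L hL1 hρ.1 (mi_eq_left _ a1 _ b1 hρ.1 h1) (mi_eq_left _ a2 _ b2 hρ.1 h2) hM hM'
  · exact slices_comm G hG1 (swp_psd hρ.1) (mi_eq_right _ a1 _ b1 hρ.1 h1)
      (mi_eq_right _ a2 _ b2 hρ.1 h2) hM hM'

end J
end NLB

namespace NLB
set_option linter.unusedSectionVars false
set_option linter.unusedSimpArgs false
section K
variable {κ κ' m o β : Type*} [Fintype κ] [Fintype κ'] [Fintype m] [DecidableEq m] [Fintype o]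
  [DecidableEq o] [Fintype β] [DecidableEq β]

/-- The Kraus map as a linear map. -/
noncomputable def chanL (K : κ → Matrix o m ℂ) : Matrix m m ℂ →ₗ[ℂ] Matrix o o ℂ where
  toFun X := chan K X
  map_add' X Y := by
    simp only [chan, Matrix.mul_add, Matrix.add_mul, Finset.sum_add_distrib]
  map_smul' c X := by
    simp only [chan, Matrix.mul_smul, Matrix.smul_mul, Finset.smul_sum, RingHom.id_apply]

lemma chanL_apply (K : κ → Matrix o m ℂ) (X : Matrix m m ℂ) : chanL K X = chan K X := rfl

lemma chanL_channel (K : κ → Matrix o m ℂ) (hK : ∑ k, (K k)ᴴ * K k = 1) :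
    IsQuantumChannel (chanL K) := by
  refine ⟨fun k M hM => ?_, fun X => ?_⟩
  · have : idTensor (chanL K) M = swp (chan (lft (Fin k) K) (swp M)) := by
      ext p q
      simp only [swp, submatrix_apply, chan_lft_apply]
      rfl
    rw [this]
    exact swp_psd (chan_psd _ (swp_psd hM))
  · exact trace_chan_eq K hK X

lemma chan_fix (K : κ → Matrix m m ℂ) {ι ι' : Type*} [Fintype ι] [Fintype ι'] (p : ι → ι' → ℂ)
    (A : ι → Matrix m m ℂ) (B : ι' → Matrix β β ℂ) (h : ∀ i, chan K (A i) = A i) :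
    chan (lft β K) (∑ i, ∑ j, p i j • (A i ⊗ₖ B j)) = ∑ i, ∑ j, p i j • (A i ⊗ₖ B j) := by
  rw [← chanL_apply]
  simp only [map_sum, map_smul, chanL_apply, chan_lft_kron, h]

/-- Kraus operators of the classical copying channel. -/
noncomputable def cpy (v : m → m → ℂ) : m → Matrix (m × m) m ℂ :=
  fun i => vecMulVec (fun x => v i x.1 * v i x.2) (star (v i))

variable {v : m → m → ℂ}

lemma cpy_sum (hv : ∀ i i', star (v i) ⬝ᵥ v i' = if i = i' then 1 else 0) :
    ∑ k, (cpy v k)ᴴ * cpy v k = 1 := by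
  have hV : (of fun a i => v i a)ᴴ * (of fun a i => v i a) = 1 := by
    ext i i'
    rw [one_apply, ← hv]
    simp [Matrix.mul_apply, dotProduct]
  have hV2 := mul_eq_one_comm.mp hV
  have hn : ∀ i, star (fun x : m × m => v i x.1 * v i x.2) ⬝ᵥ (fun x : m × m => v i x.1 * v i x.2) = 1 := by
    intro i
    have h1 := hv i i
    rw [if_pos rfl] at h1
    calc _ = (star (v i) ⬝ᵥ v i) * (star (v i) ⬝ᵥ v i) := by
          simp only [dotProduct, Fintype.sum_prod_type, Finset.sum_mul_sum, Pi.star_apply, star_mul']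
          exact Finset.sum_congr rfl fun _ _ => Finset.sum_congr rfl fun _ _ => by ring
      _ = 1 := by rw [h1, one_mul]
  have : ∀ k, (cpy v k)ᴴ * cpy v k = vecMulVec (v k) (star (v k)) := by
    intro k
    rw [cpy, conjTranspose_vecMulVec, vecMulVec_mul_vecMulVec, hn, star_star]
    simp
  simp only [this]
  rw [← hV2]
  ext a b
  simp [Matrix.sum_apply, Matrix.mul_apply, vecMulVec_apply]

lemma cpy_chan (hv : ∀ i i', star (v i) ⬝ᵥ v i' = if i = i' then 1 else 0) (i : m) :
    chan (cpy v) (vecMulVec (v i) (star (v i)))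
      = vecMulVec (fun x => v i x.1 * v i x.2) (star fun x : m × m => v i x.1 * v i x.2) := by
  have : ∀ k, cpy v k * vecMulVec (v i) (star (v i)) * (cpy v k)ᴴ = if k = i then
      vecMulVec (fun x => v i x.1 * v i x.2) (star fun x : m × m => v i x.1 * v i x.2) else 0 := by
    intro k
    rw [cpy, conjTranspose_vecMulVec, vecMulVec_mul_vecMulVec, hv, star_star]
    split_ifs with h
    · subst h
      rw [one_smul, vecMulVec_mul_vecMulVec, hv, if_pos rfl, one_smul]
    · ext a b
      simp [Matrix.mul_apply, vecMulVec_apply]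
  simp only [chan, this]
  simp

lemma cpy_one (hv : ∀ i i', star (v i) ⬝ᵥ v i' = if i = i' then 1 else 0) (i : m) :
    chan (mK1 (cpy v)) (vecMulVec (v i) (star (v i))) = vecMulVec (v i) (star (v i)) := by
  rw [chan_mK1, cpy_chan hv]
  have h1 := hv i i
  rw [if_pos rfl] at h1
  ext a b
  simp only [ptraceRight, of_apply, vecMulVec_apply, Pi.star_apply, star_mul']
  calc _ = (v i a * star (v i b)) * (star (v i) ⬝ᵥ v i) := by
        rw [dotProduct, Finset.mul_sum]
        exact Finset.sum_congr rfl fun _ _ => by simp only [Pi.star_apply]; ring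
    _ = _ := by rw [h1, mul_one]

lemma cpy_two (hv : ∀ i i', star (v i) ⬝ᵥ v i' = if i = i' then 1 else 0) (i : m) :
    chan (mK2 (cpy v)) (vecMulVec (v i) (star (v i))) = vecMulVec (v i) (star (v i)) := by
  rw [chan_mK2, cpy_chan hv]
  have h1 := hv i i
  rw [if_pos rfl] at h1
  ext a b
  simp only [ptraceLeft, of_apply, vecMulVec_apply, Pi.star_apply, star_mul']
  calc _ = (v i a * star (v i b)) * (star (v i) ⬝ᵥ v i) := by
        rw [dotProduct, Finset.mul_sum]
        exact Finset.sum_congr rfl fun _ _ => by simp only [Pi.star_apply]; ring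
    _ = _ := by rw [h1, mul_one]

lemma both_fix (K : κ → Matrix m m ℂ) (G : κ' → Matrix β β ℂ) {ι ι' : Type*} [Fintype ι]
    [Fintype ι'] (p : ι → ι' → ℂ)
    (A : ι → Matrix m m ℂ) (B : ι' → Matrix β β ℂ) (h : ∀ i, chan K (A i) = A i)
    (h' : ∀ i, chan G (B i) = B i) :
    swp (chan (lft m G) (swp (chan (lft β K) (∑ i, ∑ j, p i j • (A i ⊗ₖ B j)))))
      = ∑ i, ∑ j, p i j • (A i ⊗ₖ B j) := by
  rw [chan_fix K p A B h]
  have e : swp (∑ i, ∑ j, p i j • (A i ⊗ₖ B j)) = ∑ j, ∑ i, p i j • (B j ⊗ₖ A i) := by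
    rw [Finset.sum_comm]
    ext x y
    simp only [swp, submatrix_apply, Matrix.sum_apply, Matrix.smul_apply, kroneckerMap_apply,
      Prod.swap, smul_eq_mul]
    exact Finset.sum_congr rfl fun _ _ => Finset.sum_congr rfl fun _ _ => by ring
  rw [e, chan_fix G (fun j i => p i j) B A h', ← e, swp_swp]

theorem backward {ρ : Matrix (m × β) (m × β) ℂ} (h : ClassicalClassical ρ) :
    ∃ (Λ : Matrix m m ℂ →ₗ[ℂ] Matrix (m × m) (m × m) ℂ)
        (Γ : Matrix β β ℂ →ₗ[ℂ] Matrix (β × β) (β × β) ℂ),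
        IsQuantumChannel Λ ∧ IsQuantumChannel Γ ∧
        mutualInfo (marg11 (idTensor Γ (tensorId Λ ρ))) = mutualInfo ρ ∧
        mutualInfo (marg22 (idTensor Γ (tensorId Λ ρ))) = mutualInfo ρ := by
  obtain ⟨p, av, bv, -, -, ha, hb, rfl⟩ := h
  refine ⟨chanL (cpy av), chanL (cpy bv), chanL_channel _ (cpy_sum ha), chanL_channel _ (cpy_sum hb),
    ?_, ?_⟩
  · rw [marg11_eq _ _ (cpy av) (cpy bv) (fun _ => rfl) (fun _ => rfl),
      both_fix _ _ (fun i j => (p i j : ℂ)) (fun i => vecMulVec (av i) (star (av i)))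
        (fun i => vecMulVec (bv i) (star (bv i))) (cpy_one ha) (cpy_one hb)]
  · rw [marg22_eq _ _ (cpy av) (cpy bv) (fun _ => rfl) (fun _ => rfl),
      both_fix _ _ (fun i j => (p i j : ℂ)) (fun i => vecMulVec (av i) (star (av i)))
        (fun i => vecMulVec (bv i) (star (bv i))) (cpy_two ha) (cpy_two hb)]

end K
end NLB

/-- **No-local-broadcasting of mutual information.** There are local channels
`Λ : A → A₁A₂` and `Γ : B → B₁B₂` such that `ρ̃ = (Λ ⊗ Γ)[ρ_{AB}]` satisfies
`I(A₁:B₁) = I(A₂:B₂) = I(A:B)` if and only if `ρ_{AB}` is classical-classical. -/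
theorem no_local_broadcasting_mutualInfo {α β : Type*} [Fintype α] [DecidableEq α]
    [Fintype β] [DecidableEq β]
    (ρ : Matrix (α × β) (α × β) ℂ) (hρ : IsDensityMatrix ρ) :
    (∃ (Λ : Matrix α α ℂ →ₗ[ℂ] Matrix (α × α) (α × α) ℂ)
        (Γ : Matrix β β ℂ →ₗ[ℂ] Matrix (β × β) (β × β) ℂ),
        IsQuantumChannel Λ ∧ IsQuantumChannel Γ ∧
        mutualInfo (marg11 (idTensor Γ (tensorId Λ ρ))) = mutualInfo ρ ∧
        mutualInfo (marg22 (idTensor Γ (tensorId Λ ρ))) = mutualInfo ρ) ↔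
      ClassicalClassical ρ := by
  constructor
  · rintro ⟨Λ, Γ, hΛ, hΓ, h1, h2⟩
    exact NLB.forward hρ Λ Γ hΛ hΓ h1 h2
  · exact NLB.backward
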